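/- There exists ε ∈ (0,1) such that for every even n ≥ 2 and every pair of families (f_x)_{x∈L^n_n} and (g_x)_{x∈L^n_n} of outcomes on the maximal isotropic subspaces of (ZMod 2)^{2n}, the fraction of ordered pairs (x,y) ∈ L^n_n × L^n_n with dim(x ∩ y) = n/2 for which the outcomes f_x and g_y are consistent is at most ε^n. (Equivalently, the local value of the game Z_{n/2} satisfies Val_loc(Z_{n/2}) < ε^n.) -/

import Mathlib

open Finset

abbrev F2 := ZMod 2
/-- `F2^{2n}`, split into the first and last `n` coordinates. -/
abbrev PV (n : ℕ) := (Fin n → F2) × (Fin n → F2)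

/-- Symplectic product on `F2^{2n}`: zero iff `a₁·b₂ = a₂·b₁`. -/
def symp {n : ℕ} (a b : PV n) : F2 :=
  (∑ i, a.1 i * b.2 i) + (∑ i, a.2 i * b.1 i)

/-- A subspace is isotropic if the symplectic product vanishes on it. -/
def IsIsotropic {n : ℕ} (S : Submodule F2 (PV n)) : Prop :=
  ∀ x ∈ S, ∀ y ∈ S, symp x y = 0

/-- `Lset n k` = `L^n_k`, the set of `k`-dimensional isotropic subspaces of `F2^{2n}`. -/
def Lset (n k : ℕ) : Set (Submodule F2 (PV n)) :=
  {S | IsIsotropic S ∧ Module.finrank F2 S = k}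

/-- Integer lift of a vector over `F2`, with values in `{0,1} ⊆ ℤ`. -/
def liftZ {n : ℕ} (v : Fin n → F2) : Fin n → ℤ := fun i => ((v i).val : ℤ)

def dotZ {n : ℕ} (a b : Fin n → ℤ) : ℤ := ∑ i, a i * b i

/-- The phase `i^{x̂₁·x̂₂} · i^{ŷ₁·ŷ₂} · i^{−((x+y)^^₁·(x+y)^^₂)} · (−1)^{x̂₂·ŷ₁}`. -/
noncomputable def phase {n : ℕ} (x y : PV n) : ℂ :=
  Complex.I ^ (dotZ (liftZ x.1) (liftZ x.2)) *
  Complex.I ^ (dotZ (liftZ y.1) (liftZ y.2)) *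
  Complex.I ^ (-(dotZ (liftZ (x + y).1) (liftZ (x + y).2))) *
  (-1 : ℂ) ^ (dotZ (liftZ x.2) (liftZ y.1))

/-- `w(x,y) ∈ {0,1} ⊆ F2`: zero iff the phase equals `1`. -/
noncomputable def wght {n : ℕ} (x y : PV n) : F2 :=
  if phase x y = 1 then 0 else 1

/-- An outcome of an isotropic subspace `S` is `f : S → F2` with
`f(x+y) = f(x)+f(y)+w(x,y)`. -/
def IsOutcome {n : ℕ} (S : Submodule F2 (PV n)) (f : S → F2) : Prop :=
  ∀ x y : S, f (x + y) = f x + f y + wght (x : PV n) (y : PV n)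

/-- Two outcomes are consistent if they agree on the intersection of their domains. -/
def ConsistentOn {n : ℕ} {S₁ S₂ : Submodule F2 (PV n)} (f₁ : S₁ → F2) (f₂ : S₂ → F2) : Prop :=
  ∀ v (h1 : v ∈ S₁) (h2 : v ∈ S₂), f₁ ⟨v, h1⟩ = f₂ ⟨v, h2⟩

/-!
Fix a strategy `f` and let `β v` be the average sign that the Lagrangians through `v` give to `v`.

By Cauchy-Schwarz, the winning probability in `Z_k` is at most `2 ^ (-k)` times the mean, over the
isotropic `z` of dimension `k`, of the energy of the signs averaged over the Lagrangians above `z`.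
Enlarging an isotropic subspace by one vector hardly changes such averages, because the commutation
relation is a pseudorandom graph (its eigenvalues are those of the symplectic Fourier transform), so
the energy is governed by `∑ v, β v ^ 2`. Finally `β` correlates with the outcomes on every
Lagrangian, and the second moment of this correlation is, up to small errors, the trilinear form
`2⁻ⁿ Re tr H³` of the operator `H = ∑ v, β v • P v`, where `P v` are the Pauli operators:
submultiplicativity of the Frobenius norm bounds it by `2 ^ (7n/2)`, well below the trivial bound
`2 ^ (4n)`. For `n = 2k` this makes the winning probability `O(2 ^ (-k/2))`.

For each of the finitely many remaining `k`, no strategy wins always, so it loses on at least one of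
the finitely many question pairs. Indeed a perfect strategy would be noncontextual, its sign at `v`
being the same on all Lagrangians through `v`; the same trilinear form evaluated on these signs is
then `(16 ^ n + 4 ^ n) / 2`, exceeding the Frobenius bound (the Mermin-Peres obstruction).
-/

open BigOperators

/-- The isomorphism of `F2` with the signs `±1`; summing signs detects linear forms. -/
noncomputable def signChar : AddChar F2 ℝ := AddChar.zmodChar 2 (ζ := -1) (by norm_num)

theorem F2.eq_zero_or_eq_one (a : F2) : a = 0 ∨ a = 1 := by
  revert a; decide

theorem signChar_one : signChar 1 = -1 := by
  simp [signChar, AddChar.zmodChar_apply, ZMod.val_one]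

theorem signChar_eq_ite (a : F2) : signChar a = if a = 0 then 1 else -1 := by
  obtain rfl | rfl := F2.eq_zero_or_eq_one a <;> simp [signChar_one]

theorem abs_signChar (a : F2) : |signChar a| = 1 := by
  rw [signChar_eq_ite]; split_ifs <;> norm_num

theorem signChar_mul_self (a : F2) : signChar a * signChar a = 1 := by
  rw [← abs_mul_abs_self, abs_signChar, one_mul]

theorem signChar_inj {a b : F2} : signChar a = signChar b ↔ a = b := by
  obtain rfl | rfl := F2.eq_zero_or_eq_one a <;> obtain rfl | rfl := F2.eq_zero_or_eq_one b <;>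
    norm_num [signChar_one]

theorem sum_signChar_comp {G : Type*} [AddGroup G] [Fintype G] (d : G →+ F2) :
    ∑ v, signChar (d v) = if d = 0 then (Fintype.card G : ℝ) else 0 := by
  have h := (signChar.compAddMonoidHom d).sum_eq_ite
  have hd : signChar.compAddMonoidHom d = 0 ↔ d = 0 := by
    simp only [DFunLike.ext_iff, AddChar.compAddMonoidHom_apply, AddChar.zero_apply,
      AddMonoidHom.zero_apply, ← signChar_inj, AddChar.map_zero_eq_one]
  simpa only [hd, AddChar.compAddMonoidHom_apply] using h

section SpanSingleton

variable {V : Type*} [AddCommGroup V] [Module F2 V]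

theorem mem_span_singleton_F2 {v w : V} : v ∈ F2 ∙ w ↔ v = 0 ∨ v = w := by
  rw [Submodule.mem_span_singleton]
  constructor
  · rintro ⟨a, rfl⟩
    obtain rfl | rfl := F2.eq_zero_or_eq_one a <;> simp
  · rintro (rfl | rfl)
    exacts [⟨0, zero_smul _ _⟩, ⟨1, one_smul _ _⟩]

theorem finrank_span_singleton_F2_le_one (v : V) : Module.finrank F2 (F2 ∙ v) ≤ 1 := by
  simpa only [Set.toFinset_singleton, card_singleton] using finrank_span_le_card (R := F2) {v}

theorem mem_sup_span_singleton_F2 {u : Submodule F2 V} {v w : V} :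
    v ∈ u ⊔ F2 ∙ w ↔ v ∈ u ∨ v + w ∈ u := by
  have hw : w + w = 0 := ZModModule.add_self w
  simp only [Submodule.mem_sup, mem_span_singleton_F2]
  constructor
  · rintro ⟨a, ha, b, rfl | rfl, rfl⟩
    · exact .inl (by rwa [add_zero])
    · exact .inr (by rwa [add_assoc, hw, add_zero])
  · rintro (h | h)
    · exact ⟨v, h, 0, .inl rfl, add_zero v⟩
    · exact ⟨v + w, h, w, .inr rfl, by rw [add_assoc, hw, add_zero]⟩

theorem sup_span_singleton_add_of_mem {u : Submodule F2 V} {v : V} (hv : v ∈ u) (w : V) :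
    u ⊔ F2 ∙ (w + v) = u ⊔ F2 ∙ w := by
  ext a
  rw [mem_sup_span_singleton_F2, mem_sup_span_singleton_F2, ← add_assoc, u.add_mem_iff_left hv]

theorem card_submodule_F2 [Fintype V] (u : Submodule F2 V) [DecidablePred (· ∈ u)] :
    #{v | v ∈ u} = 2 ^ Module.finrank F2 u := by
  rw [← Fintype.card_subtype, Module.card_eq_pow_finrank (K := F2) (V := u), ZMod.card]

theorem card_mem_diff_F2 [Fintype V] {u z : Submodule F2 V} [DecidablePred (· ∈ u)]
    [DecidablePred (· ∈ z)] (h : u ≤ z) :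
    #{v | v ∈ z ∧ v ∉ u} = 2 ^ Module.finrank F2 z - 2 ^ Module.finrank F2 u := by
  classical
  rw [← card_submodule_F2, ← card_submodule_F2, ← card_sdiff_of_subset
    (monotone_filter_right _ fun v _ hv ↦ h hv)]
  congr 1
  ext v
  simp

end SpanSingleton

theorem exists_le_le_finrank_eq {K V : Type*} [Field K] [AddCommGroup V] [Module K V]
    [Module.Finite K V] {u t : Submodule K V} {k : ℕ} (hut : u ≤ t) (hu : Module.finrank K u ≤ k)
    (ht : k ≤ Module.finrank K t) : ∃ z, u ≤ z ∧ z ≤ t ∧ Module.finrank K z = k := by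
  induction k, hu using Nat.le_induction with
  | base => exact ⟨u, le_rfl, hut, rfl⟩
  | succ k _ ih =>
    obtain ⟨z, huz, hzt, hz⟩ := ih (by omega)
    have hlt : z < t := lt_of_le_of_ne hzt fun h ↦ by
      rw [h] at hz
      omega
    obtain ⟨a, hat, haz⟩ := SetLike.exists_of_lt hlt
    exact ⟨z ⊔ K ∙ a, le_sup_of_le_left huz,
      sup_le hzt ((Submodule.span_singleton_le_iff_mem a t).2 hat),
      by rw [Submodule.finrank_sup_span_singleton haz, hz]⟩

section SymplecticForm

variable {n : ℕ}

theorem symp_add_left (a b c : PV n) : symp (a + b) c = symp a c + symp b c := by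
  simp only [symp, Prod.fst_add, Prod.snd_add, Pi.add_apply, add_mul, sum_add_distrib]
  exact add_add_add_comm ..

theorem symp_comm (a b : PV n) : symp a b = symp b a := by
  simp only [symp, mul_comm, add_comm]

theorem symp_add_right (a b c : PV n) : symp a (b + c) = symp a b + symp a c := by
  simp only [symp_comm a, symp_add_left]

theorem symp_self (a : PV n) : symp a a = 0 := by
  simp only [symp, mul_comm (a.2 _), CharTwo.add_self_eq_zero]

theorem symp_smul_left (t : F2) (a b : PV n) : symp (t • a) b = t • symp a b := by
  simp only [symp, Prod.smul_fst, Prod.smul_snd, Pi.smul_apply, smul_eq_mul, mul_assoc, mul_add,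
    mul_sum]

/-- The symplectic product as a bilinear form. -/
def sympForm (n : ℕ) : LinearMap.BilinForm F2 (PV n) :=
  LinearMap.mk₂ F2 symp symp_add_left symp_smul_left symp_add_right
    fun t a b ↦ by rw [symp_comm, symp_smul_left, symp_comm]

theorem sympForm_apply (a b : PV n) : sympForm n a b = symp a b := rfl

theorem eq_zero_of_symp_eq_zero {a : PV n} (h : ∀ b, symp a b = 0) : a = 0 := by
  ext i
  · simpa [symp, Pi.single_apply] using h (0, Pi.single i 1)
  · simpa [symp, Pi.single_apply] using h (Pi.single i 1, 0)

theorem symp_zero_left (a : PV n) : symp 0 a = 0 := (sympForm n).map_zero₂ a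

theorem sympForm_isRefl : (sympForm n).IsRefl := fun a b h ↦ by
  rwa [sympForm_apply, symp_comm]

theorem sympForm_nondegenerate : (sympForm n).Nondegenerate :=
  (LinearMap.IsRefl.nondegenerate_iff_separatingLeft sympForm_isRefl).2
    fun _ ↦ eq_zero_of_symp_eq_zero

theorem finrank_PV : Module.finrank F2 (PV n) = 2 * n := by
  rw [Module.finrank_prod, Module.finrank_fin_fun, two_mul]

theorem card_PV : Fintype.card (PV n) = 4 ^ n := by
  rw [Module.card_eq_pow_finrank (K := F2), finrank_PV, ZMod.card, pow_mul]
  norm_num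

theorem sum_signChar_symp (a : PV n) : ∑ b, signChar (symp a b) = if a = 0 then 4 ^ n else 0 := by
  have h : (sympForm n a).toAddMonoidHom = 0 ↔ a = 0 :=
    ⟨fun h ↦ eq_zero_of_symp_eq_zero fun b ↦ DFunLike.congr_fun h b, fun h ↦ by subst h; simp; rfl⟩
  have key := sum_signChar_comp (sympForm n a).toAddMonoidHom
  simp only [h, card_PV, Nat.cast_pow, Nat.cast_ofNat] at key
  exact key

/-- The symplectic complement of a subspace. -/
def perp (u : Submodule F2 (PV n)) : Submodule F2 (PV n) := (sympForm n).orthogonal u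

variable {u v x y z : Submodule F2 (PV n)} {a b w : PV n} {k : ℕ}

theorem mem_perp : a ∈ perp u ↔ ∀ b ∈ u, symp b a = 0 := Iff.rfl

theorem perp_antitone (h : u ≤ v) : perp v ≤ perp u := LinearMap.BilinForm.orthogonal_le h

theorem finrank_perp (u : Submodule F2 (PV n)) :
    Module.finrank F2 (perp u) = 2 * n - Module.finrank F2 u := by
  rw [perp, LinearMap.BilinForm.finrank_orthogonal sympForm_nondegenerate, finrank_PV]

theorem mem_perp_sup_span_singleton : a ∈ perp (u ⊔ F2 ∙ w) ↔ a ∈ perp u ∧ symp w a = 0 := by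
  refine ⟨fun h ↦ ⟨perp_antitone le_sup_left h, h w ?_⟩, fun h b hb ↦ ?_⟩
  · exact le_sup_right (α := Submodule F2 (PV n)) (Submodule.mem_span_singleton_self w)
  · obtain hb | hb := mem_sup_span_singleton_F2.1 hb
    · exact h.1 b hb
    · have hab := h.1 _ hb
      rwa [sympForm_apply, symp_add_left, h.2, add_zero] at hab

namespace IsIsotropic

theorem bot : IsIsotropic (⊥ : Submodule F2 (PV n)) := by
  rintro a ha b -
  rw [(Submodule.mem_bot F2).1 ha]
  exact symp_zero_left b

theorem mono (hv : IsIsotropic v) (h : u ≤ v) : IsIsotropic u :=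
  fun a ha b hb ↦ hv a (h ha) b (h hb)

theorem le_perp (hu : IsIsotropic u) : u ≤ perp u := fun a ha b hb ↦ hu b hb a ha

theorem sup (hu : IsIsotropic u) (hv : IsIsotropic v) (h : v ≤ perp u) : IsIsotropic (u ⊔ v) := by
  intro a ha b hb
  obtain ⟨a₁, ha₁, a₂, ha₂, rfl⟩ := Submodule.mem_sup.1 ha
  obtain ⟨b₁, hb₁, b₂, hb₂, rfl⟩ := Submodule.mem_sup.1 hb
  have h₁₂ : symp a₁ b₂ = 0 := h hb₂ _ ha₁
  have h₂₁ : symp a₂ b₁ = 0 := (symp_comm _ _).trans (h ha₂ _ hb₁)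
  simp only [symp_add_left, symp_add_right, hu _ ha₁ _ hb₁, hv _ ha₂ _ hb₂, h₁₂, h₂₁, add_zero]

theorem span_singleton (w : PV n) : IsIsotropic (F2 ∙ w) := by
  intro a ha b hb
  obtain rfl | rfl := mem_span_singleton_F2.1 ha <;>
    obtain rfl | rfl := mem_span_singleton_F2.1 hb <;>
      simp only [symp_self, symp_zero_left, symp_comm _ (0 : PV n)]

theorem sup_span_singleton (hu : IsIsotropic u) (hw : w ∈ perp u) : IsIsotropic (u ⊔ F2 ∙ w) :=
  hu.sup (span_singleton w) ((Submodule.span_singleton_le_iff_mem _ _).2 hw)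

theorem finrank_le (hu : IsIsotropic u) : Module.finrank F2 u ≤ n := by
  have h := Submodule.finrank_mono hu.le_perp
  rw [finrank_perp] at h
  omega

end IsIsotropic

theorem perp_eq_self (hx : x ∈ Lset n n) : perp x = x :=
  (Submodule.eq_of_le_of_finrank_eq hx.1.le_perp
    (by rw [finrank_perp, hx.2, two_mul, Nat.add_sub_cancel])).symm

theorem bot_mem_Lset : (⊥ : Submodule F2 (PV n)) ∈ Lset n 0 := ⟨.bot, finrank_bot F2 _⟩

theorem span_singleton_mem_Lset (ha : a ≠ 0) : F2 ∙ a ∈ Lset n 1 :=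
  ⟨.span_singleton a, finrank_span_singleton ha⟩

theorem sup_inf_perp_mem_Lset (hx : x ∈ Lset n n) (hu : IsIsotropic u) :
    u ⊔ x ⊓ perp u ∈ Lset n n := by
  have hiso : IsIsotropic (u ⊔ x ⊓ perp u) := hu.sup (hx.1.mono inf_le_left) inf_le_right
  refine ⟨hiso, hiso.finrank_le.antisymm ?_⟩
  have hxu : x ⊓ perp u = perp (x ⊔ u) := by
    ext a
    conv_lhs => rw [← perp_eq_self hx]
    simp only [Submodule.mem_inf, mem_perp, Submodule.mem_sup]
    refine ⟨?_, fun h ↦ ⟨fun b hb ↦ ?_, fun b hb ↦ ?_⟩⟩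
    · rintro ⟨hax, hau⟩ _ ⟨b, hb, c, hc, rfl⟩
      rw [symp_add_left, hax b hb, hau c hc, add_zero]
    · exact h b ⟨b, hb, 0, u.zero_mem, add_zero b⟩
    · exact h b ⟨0, x.zero_mem, b, hb, zero_add b⟩
  have hux : u ⊓ (x ⊓ perp u) = x ⊓ u := by
    rw [← inf_assoc, inf_comm u x, inf_assoc, inf_eq_left.2 hu.le_perp]
  have h₁ := Submodule.finrank_sup_add_finrank_inf_eq u (x ⊓ perp u)
  have h₂ := Submodule.finrank_sup_add_finrank_inf_eq x u
  have h₃ : Module.finrank F2 ↥(x ⊓ perp u) = 2 * n - Module.finrank F2 ↥(x ⊔ u) := by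
    rw [hxu, finrank_perp]
  rw [hux] at h₁
  have := hx.2
  omega

end SymplecticForm

section Counting

variable {n j k : ℕ} {u x y z : Submodule F2 (PV n)} {w : PV n}

noncomputable instance : Fintype (Submodule F2 (PV n)) := Fintype.ofFinite _

noncomputable instance (u : Submodule F2 (PV n)) : DecidablePred (· ∈ u) := Classical.decPred _

open Classical in
/-- The `k`-dimensional isotropic subspaces containing `u`. -/
noncomputable def isotropicAbove (k : ℕ) (u : Submodule F2 (PV n)) :
    Finset (Submodule F2 (PV n)) := {z | z ∈ Lset n k ∧ u ≤ z}

theorem mem_isotropicAbove : z ∈ isotropicAbove k u ↔ z ∈ Lset n k ∧ u ≤ z := by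
  simp only [isotropicAbove, mem_filter_univ]

theorem mem_isotropicAbove_bot :
    x ∈ isotropicAbove k ⊥ ↔ x ∈ Lset n k :=
  mem_isotropicAbove.trans (and_iff_left bot_le)

theorem mem_isotropicAbove_span_singleton :
    x ∈ isotropicAbove k (F2 ∙ w) ↔ x ∈ Lset n k ∧ w ∈ x := by
  rw [mem_isotropicAbove, Submodule.span_singleton_le_iff_mem]

theorem sum_isotropicAbove_bot {φ : Submodule F2 (PV n) → ℝ}
    (hφ : ∀ x, ¬ u ≤ x → φ x = 0) :
    ∑ x ∈ isotropicAbove k ⊥, φ x = ∑ x ∈ isotropicAbove k u, φ x := by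
  have hsub : isotropicAbove k u ⊆ isotropicAbove k ⊥ := fun x hx ↦
    mem_isotropicAbove_bot.2 (mem_isotropicAbove.1 hx).1
  refine (sum_subset hsub fun x hx hxu ↦ hφ x fun hux ↦ hxu ?_).symm
  exact mem_isotropicAbove.2 ⟨mem_isotropicAbove_bot.1 hx, hux⟩

/-- The vectors by which the isotropic subspace `u` can be enlarged to an isotropic subspace of
one dimension more. -/
noncomputable def extensionVectors (u : Submodule F2 (PV n)) : Finset (PV n) :=
  {w | w ∈ perp u ∧ w ∉ u}

theorem mem_extensionVectors : w ∈ extensionVectors u ↔ w ∈ perp u ∧ w ∉ u := by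
  rw [extensionVectors, mem_filter_univ]

theorem mem_extensionVectors_span_singleton_add {a b : PV n} (ha : a ≠ 0) (hb : b ≠ 0)
    (h : symp a b = 0) : a ∈ extensionVectors (F2 ∙ (a + b)) := by
  rw [mem_extensionVectors, mem_span_singleton_F2, left_eq_add]
  refine ⟨fun c hc ↦ ?_, not_or.2 ⟨ha, hb⟩⟩
  obtain rfl | rfl := mem_span_singleton_F2.1 hc
  · exact symp_zero_left a
  · rw [sympForm_apply, symp_comm, symp_add_right, symp_self, h, add_zero]

theorem card_extensionVectors (hu : u ∈ Lset n j) :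
    (#(extensionVectors u) : ℝ) = 2 ^ (2 * n - j) - 2 ^ j := by
  have hle := Submodule.finrank_mono hu.1.le_perp
  rw [extensionVectors, card_mem_diff_F2 hu.1.le_perp,
    Nat.cast_sub (Nat.pow_le_pow_right two_pos hle), finrank_perp, hu.2]
  norm_num

theorem sup_span_singleton_mem_Lset (hu : u ∈ Lset n j) (hw : w ∈ extensionVectors u) :
    u ⊔ F2 ∙ w ∈ Lset n (j + 1) := by
  obtain ⟨hw, hwu⟩ := mem_extensionVectors.1 hw
  exact ⟨hu.1.sup_span_singleton hw, by rw [Submodule.finrank_sup_span_singleton hwu, hu.2]⟩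

theorem mem_isotropicAbove_sup_span_singleton :
    z ∈ isotropicAbove k (u ⊔ F2 ∙ w) ↔ z ∈ isotropicAbove k u ∧ w ∈ z := by
  rw [mem_isotropicAbove, mem_isotropicAbove, sup_le_iff, Submodule.span_singleton_le_iff_mem,
    and_assoc]

theorem isotropicAbove_self (hu : u ∈ Lset n k) : isotropicAbove k u = {u} := by
  ext z
  rw [mem_isotropicAbove, mem_singleton]
  refine ⟨fun h ↦ (Submodule.eq_of_le_of_finrank_eq h.2 (hu.2.trans h.1.2.symm)).symm, ?_⟩
  rintro rfl
  exact ⟨hu, le_rfl⟩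

theorem sum_isotropicAbove_sum_mem (φ : Submodule F2 (PV n) → PV n → ℝ) :
    ∑ z ∈ isotropicAbove k u, ∑ w with w ∈ z, φ z w =
      ∑ w, ∑ z ∈ isotropicAbove k (u ⊔ F2 ∙ w), φ z w :=
  sum_comm' fun z w ↦ by
    simp only [mem_isotropicAbove_sup_span_singleton, mem_filter_univ, mem_univ, and_true]

theorem sum_extensionVectors_sum_isotropicAbove (hu : u ∈ Lset n j)
    (φ : Submodule F2 (PV n) → ℝ) :
    ∑ w ∈ extensionVectors u, ∑ z ∈ isotropicAbove k (u ⊔ F2 ∙ w), φ z =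
      (2 ^ k - 2 ^ j) * ∑ z ∈ isotropicAbove k u, φ z := by
  have hswap : ∑ w ∈ extensionVectors u, ∑ z ∈ isotropicAbove k (u ⊔ F2 ∙ w), φ z =
      ∑ z ∈ isotropicAbove k u, ∑ w with w ∈ z ∧ w ∉ u, φ z := by
    refine sum_comm' fun w z ↦ ?_
    rw [mem_extensionVectors, mem_isotropicAbove_sup_span_singleton, mem_filter_univ]
    refine ⟨fun h ↦ ⟨⟨h.2.2, h.1.2⟩, h.2.1⟩, fun h ↦ ⟨⟨?_, h.1.2⟩, h.2, h.1.1⟩⟩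
    obtain ⟨hz, huz⟩ := mem_isotropicAbove.1 h.2
    exact perp_antitone huz (hz.1.le_perp h.1.1)
  rw [hswap, mul_sum]
  refine sum_congr rfl fun z hz ↦ ?_
  obtain ⟨hz, huz⟩ := mem_isotropicAbove.1 hz
  have hle := Submodule.finrank_mono huz
  rw [sum_const, nsmul_eq_mul, card_mem_diff_F2 huz,
    Nat.cast_sub (Nat.pow_le_pow_right two_pos hle), hz.2, hu.2]
  norm_num

/-- The number of `k`-dimensional isotropic subspaces of `F2^{2n}` containing a given isotropic
subspace of dimension `j`. -/
noncomputable def isotropicCount (n k j : ℕ) : ℝ :=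
  ∏ i ∈ Ico j k, (2 ^ (2 * n - i) - 2 ^ i) / (2 ^ k - 2 ^ i)

theorem isotropicCount_self : isotropicCount n k k = 1 := by
  rw [isotropicCount, Ico_self, prod_empty]

theorem isotropicCount_step (h : j < k) :
    (2 ^ k - 2 ^ j) * isotropicCount n k j =
      (2 ^ (2 * n - j) - 2 ^ j) * isotropicCount n k (j + 1) := by
  have hpos : (0 : ℝ) < 2 ^ k - 2 ^ j := sub_pos.2 (pow_lt_pow_right₀ one_lt_two h)
  rw [isotropicCount, prod_eq_prod_Ico_succ_bot h, ← isotropicCount]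
  field_simp

theorem isotropicCount_pos (hk : k ≤ n) : 0 < isotropicCount n k j := by
  refine prod_pos fun i hi ↦ ?_
  have hik := (mem_Ico.1 hi).2
  exact div_pos (sub_pos.2 (pow_lt_pow_right₀ one_lt_two (by omega)))
    (sub_pos.2 (pow_lt_pow_right₀ one_lt_two hik))

theorem card_isotropicAbove (hjk : j ≤ k) (hu : u ∈ Lset n j) :
    (#(isotropicAbove k u) : ℝ) = isotropicCount n k j := by
  induction hjk using Nat.decreasingInduction generalizing u with
  | self => rw [isotropicAbove_self hu, card_singleton, isotropicCount_self, Nat.cast_one]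
  | of_succ j hjk ih =>
    have hpos : (0 : ℝ) < 2 ^ k - 2 ^ j := sub_pos.2 (pow_lt_pow_right₀ one_lt_two hjk)
    have hsum := sum_extensionVectors_sum_isotropicAbove (k := k) hu fun _ ↦ 1
    simp only [sum_const, nsmul_one] at hsum
    rw [sum_congr rfl fun w hw ↦ ih (sup_span_singleton_mem_Lset hu hw), sum_const, nsmul_eq_mul,
      card_extensionVectors hu, ← isotropicCount_step hjk] at hsum
    exact (mul_left_cancel₀ hpos.ne' hsum).symm

theorem isotropicAbove_nonempty (hjk : j ≤ k) (hk : k ≤ n) (hu : u ∈ Lset n j) :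
    (isotropicAbove k u).Nonempty := by
  rw [← card_pos, ← Nat.cast_pos (α := ℝ), card_isotropicAbove hjk hu]
  exact isotropicCount_pos hk

theorem isotropicCount_lagrangian_step (h : j < n) :
    isotropicCount n n j = (2 ^ (n - j) + 1) * isotropicCount n n (j + 1) := by
  have hstep := isotropicCount_step (n := n) h
  obtain ⟨d, rfl⟩ := Nat.exists_eq_add_of_lt h
  have hpos : (0 : ℝ) < 2 ^ (j + d + 1) - 2 ^ j :=
    sub_pos.2 (pow_lt_pow_right₀ one_lt_two (by omega))
  refine mul_left_cancel₀ hpos.ne' (hstep.trans ?_)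
  rw [show 2 * (j + d + 1) - j = j + d + 1 + (d + 1) by omega,
    show j + d + 1 - j = d + 1 by omega]
  ring

theorem isotropicCount_lagrangian_mul_le (h : j + 2 ≤ n) :
    isotropicCount n n j * isotropicCount n n (j + 2) ≤ 2 * isotropicCount n n (j + 1) ^ 2 := by
  rw [isotropicCount_lagrangian_step (show j < n by omega),
    isotropicCount_lagrangian_step (show j + 1 < n by omega),
    show n - j = n - (j + 1) + 1 by omega]
  have := isotropicCount_pos (j := j + 1 + 1) le_rfl (n := n)
  have hm : (0 : ℝ) ≤ 2 ^ (n - (j + 1)) := by positivity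
  rw [pow_succ (2 : ℝ)]
  nlinarith [mul_nonneg hm (sq_nonneg (isotropicCount n n (j + 1 + 1))),
    sq_nonneg (isotropicCount n n (j + 1 + 1))]

theorem card_perp_diff_sup (hx : x ∈ Lset n n) (hu : u ∈ Lset n j) :
    (#{w | w ∈ perp u ∧ w ∉ u ⊔ x} : ℝ) = 2 ^ (2 * n - j) - 2 ^ n := by
  have hle : u ⊔ x ⊓ perp u ≤ perp u := sup_le hu.1.le_perp inf_le_right
  have hmem : ∀ w, w ∈ perp u ∧ w ∉ u ⊔ x ↔ w ∈ perp u ∧ w ∉ u ⊔ x ⊓ perp u := fun w ↦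
    and_congr_right fun hw ↦ not_congr <| by
      rw [← sup_inf_assoc_of_le x hu.1.le_perp, Submodule.mem_inf, and_iff_left hw]
  have hcard := sup_inf_perp_mem_Lset hx hu.1
  simp only [hmem]
  rw [card_mem_diff_F2 hle,
    Nat.cast_sub (Nat.pow_le_pow_right two_pos (Submodule.finrank_mono hle)), finrank_perp, hu.2,
    hcard.2]
  norm_num

theorem perp_diff_sup_subset_extensionVectors (x u : Submodule F2 (PV n)) :
    univ.filter (fun w ↦ w ∈ perp u ∧ w ∉ u ⊔ x) ⊆ extensionVectors u :=
  monotone_filter_right _ fun _ _ hw ↦ ⟨hw.1, fun h ↦ hw.2 (SetLike.le_def.1 le_sup_left h)⟩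

theorem inf_sup_span_singleton (hw : w ∉ u ⊔ x) : x ⊓ (u ⊔ F2 ∙ w) = x ⊓ u := by
  refine le_antisymm (fun v hv ↦ ⟨hv.1, ?_⟩) (inf_le_inf_left x le_sup_left)
  refine (mem_sup_span_singleton_F2.1 hv.2).resolve_right fun h ↦ hw ?_
  have hw' : v + w + v = w := by rw [add_right_comm, ZModModule.add_self, zero_add]
  exact hw' ▸ Submodule.add_mem_sup h hv.1

/-- The Lagrangians above `u` that meet `x` only where `u` does. -/
noncomputable def transversals (x u : Submodule F2 (PV n)) : Finset (Submodule F2 (PV n)) :=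
  {y ∈ isotropicAbove n u | x ⊓ y = x ⊓ u}

theorem mem_transversals :
    y ∈ transversals x u ↔ (y ∈ Lset n n ∧ u ≤ y) ∧ x ⊓ y = x ⊓ u := by
  rw [transversals, mem_filter, mem_isotropicAbove]

theorem sum_card_transversals_le (hu : u ∈ Lset n j) :
    ∑ w with w ∈ perp u ∧ w ∉ u ⊔ x, (#(transversals x (u ⊔ F2 ∙ w)) : ℝ) ≤
      (2 ^ n - 2 ^ j) * #(transversals x u) := by
  have hsum := sum_extensionVectors_sum_isotropicAbove (k := n) hu
    fun y ↦ if x ⊓ y = x ⊓ u then 1 else 0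
  simp only [← sum_filter, sum_const, nsmul_one] at hsum
  rw [transversals, ← hsum]
  calc ∑ w with w ∈ perp u ∧ w ∉ u ⊔ x, (#(transversals x (u ⊔ F2 ∙ w)) : ℝ)
      = ∑ w with w ∈ perp u ∧ w ∉ u ⊔ x,
          (#{y ∈ isotropicAbove n (u ⊔ F2 ∙ w) | x ⊓ y = x ⊓ u} : ℝ) :=
        sum_congr rfl fun w hw ↦ by
          rw [transversals, inf_sup_span_singleton (mem_filter.1 hw).2.2]
    _ ≤ _ := by
        exact sum_le_sum_of_subset_of_nonneg (perp_diff_sup_subset_extensionVectors x u)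
          fun _ _ _ ↦ Nat.cast_nonneg _

-- At least a fraction `(1 + 2 / 2 ^ (n - j)) / 3` of the Lagrangians above `u` is transverse; the
-- decaying term makes the induction on `n - j` close.
theorem mul_isotropicCount_le_card_transversals (hx : x ∈ Lset n n) (hjn : j ≤ n)
    (hu : u ∈ Lset n j) :
    (2 ^ (n - j) + 2) * isotropicCount n n j ≤ 3 * 2 ^ (n - j) * #(transversals x u) := by
  induction hjn using Nat.decreasingInduction generalizing u with
  | self =>
    rw [transversals, isotropicAbove_self hu, isotropicCount_self, filter_singleton, if_pos rfl]
    norm_num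
  | of_succ j hjn ih =>
    have hNpos := isotropicCount_pos (j := j + 1) le_rfl (n := n)
    have hsum := sum_le_sum fun w hw ↦
      ih (sup_span_singleton_mem_Lset hu (perp_diff_sup_subset_extensionVectors x u hw))
    rw [sum_const, nsmul_eq_mul, card_perp_diff_sup hx hu, ← mul_sum] at hsum
    have hT := sum_card_transversals_le (x := x) hu
    rw [isotropicCount_lagrangian_step hjn]
    generalize isotropicCount n n (j + 1) = N at *
    generalize (#(transversals x u) : ℝ) = T at *
    obtain ⟨d, rfl⟩ := Nat.exists_eq_add_of_lt hjn
    rw [show 2 * (j + d + 1) - j = j + d + (d + 2) by omega] at hsum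
    rw [show j + d + 1 - (j + 1) = d by omega] at hsum
    rw [show j + d + 1 - j = d + 1 by omega]
    have hm : (1 : ℝ) ≤ 2 ^ d := one_le_pow₀ one_le_two
    have hc : (0 : ℝ) < 2 ^ j := by positivity
    simp only [pow_add, pow_one] at *
    generalize (2 : ℝ) ^ d = m at *
    generalize (2 : ℝ) ^ j = c at *
    have hT' : 2 * (m + 2) * N ≤ 3 * T := by
      refine le_of_mul_le_mul_left (a := c * m * (2 * m - 1)) ?_
        (mul_pos (mul_pos hc (by linarith)) (by linarith))
      linarith [mul_le_mul_of_nonneg_left hT (by linarith : 0 ≤ 3 * m)]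
    nlinarith

theorem isotropicCount_le_card_transversals (hx : x ∈ Lset n n) (hu : u ∈ Lset n j) :
    isotropicCount n n j ≤ 3 * #(transversals x u) := by
  have hjn : j ≤ n := hu.2 ▸ hu.1.finrank_le
  have h := mul_isotropicCount_le_card_transversals hx hjn hu
  have hpos := isotropicCount_pos (j := j) le_rfl (n := n)
  refine le_of_mul_le_mul_left (a := 2 ^ (n - j)) ?_ (by positivity)
  linarith

end Counting

section Fourier

variable {n : ℕ}

/-- The Fourier transform on `F2^{2n}` with respect to the symplectic pairing. -/
noncomputable def sympFourier (ψ : PV n → ℝ) (a : PV n) : ℝ := ∑ b, signChar (symp a b) * ψ b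

theorem sum_sq_sympFourier (ψ : PV n → ℝ) : ∑ a, sympFourier ψ a ^ 2 = 4 ^ n * ∑ b, ψ b ^ 2 :=
  calc ∑ a, sympFourier ψ a ^ 2
      = ∑ b, ∑ c, ψ b * ψ c * ∑ a, signChar (symp (b + c) a) := by
        simp only [sympFourier, sq, sum_mul_sum]
        rw [sum_comm]
        refine sum_congr rfl fun b _ ↦ ?_
        rw [sum_comm]
        refine sum_congr rfl fun c _ ↦ ?_
        rw [mul_sum]
        refine sum_congr rfl fun a _ ↦ ?_
        rw [symp_comm (b + c), symp_add_right, AddChar.map_add_eq_mul]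
        ring
    _ = 4 ^ n * ∑ b, ψ b ^ 2 := by
        rw [mul_sum]
        refine sum_congr rfl fun b _ ↦ ?_
        simp only [sum_signChar_symp, ← ZModModule.sub_eq_add b, sub_eq_zero]
        simp [sq, mul_comm]

theorem sum_sum_signChar_symp_mul_le (ψ : PV n → ℝ) :
    ∑ a, ∑ b, signChar (symp a b) * (ψ a * ψ b) ≤ 2 ^ n * ∑ a, ψ a ^ 2 := by
  have hterm : ∀ a, 2 * 2 ^ n * (ψ a * sympFourier ψ a) ≤ 4 ^ n * ψ a ^ 2 + sympFourier ψ a ^ 2 :=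
    fun a ↦ by
      rw [show (4 : ℝ) = 2 * 2 by norm_num, mul_pow]
      linarith [sq_nonneg (2 ^ n * ψ a - sympFourier ψ a)]
  have hsum := sum_le_sum fun a (_ : a ∈ univ) ↦ hterm a
  rw [sum_add_distrib, sum_sq_sympFourier, ← mul_sum, ← mul_sum] at hsum
  have hLHS : ∑ a, ∑ b, signChar (symp a b) * (ψ a * ψ b) = ∑ a, ψ a * sympFourier ψ a := by
    simp only [sympFourier, mul_sum, mul_left_comm]
  rw [hLHS]
  refine le_of_mul_le_mul_left (a := 2 * 2 ^ n) (hsum.trans_eq ?_) (by positivity)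
  rw [show (4 : ℝ) = 2 * 2 by norm_num, mul_pow]
  ring

theorem sum_sum_commuting_mul_le {ψ : PV n → ℝ} (hψ : ∑ a, ψ a = 0) :
    ∑ a, ∑ b, (if symp a b = 0 then ψ a * ψ b else 0) ≤ 2 ^ n / 2 * ∑ a, ψ a ^ 2 := by
  have hterm : ∀ a b, (if symp a b = 0 then ψ a * ψ b else 0) =
      (ψ a * ψ b + signChar (symp a b) * (ψ a * ψ b)) / 2 := fun a b ↦ by
    rw [signChar_eq_ite]
    split_ifs <;> ring
  have hprod : ∑ a, ∑ b, ψ a * ψ b = 0 := by rw [← sum_mul_sum, hψ, zero_mul]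
  simp only [hterm, ← sum_div, sum_add_distrib, hprod, zero_add]
  linarith [sum_sum_signChar_symp_mul_le ψ]

end Fourier

section Variance

variable {n j k : ℕ} {u : Submodule F2 (PV n)} {v w w' : PV n} {F : Submodule F2 (PV n) → ℝ}

theorem card_isotropicAbove_sup_sup (hj : j + 2 ≤ n) (hu : u ∈ Lset n j)
    (hw : w ∈ extensionVectors u) (hw' : w' ∈ extensionVectors u) :
    (#(isotropicAbove n (u ⊔ F2 ∙ w ⊔ F2 ∙ w')) : ℝ) =
      (if symp w w' = 0 then isotropicCount n n (j + 2) else 0) +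
      if w' + w ∈ u then isotropicCount n n (j + 1) - isotropicCount n n (j + 2) else 0 := by
  have huw := sup_span_singleton_mem_Lset hu hw
  by_cases hmem : w' + w ∈ u
  · have hsymp : symp w w' = 0 := by
      have := (mem_extensionVectors.1 hw).1 _ hmem
      rwa [sympForm_apply, symp_add_left, symp_self, add_zero, symp_comm] at this
    have hle : F2 ∙ w' ≤ u ⊔ F2 ∙ w :=
      (Submodule.span_singleton_le_iff_mem _ _).2 (mem_sup_span_singleton_F2.2 (.inr hmem))
    rw [if_pos hsymp, if_pos hmem, sup_eq_left.2 hle, card_isotropicAbove (by omega) huw]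
    ring
  rw [if_neg hmem, add_zero]
  split_ifs with hsymp
  · have hw'' : w' ∈ extensionVectors (u ⊔ F2 ∙ w) := by
      obtain ⟨hp, hnot⟩ := mem_extensionVectors.1 hw'
      rw [mem_extensionVectors, mem_perp_sup_span_singleton, mem_sup_span_singleton_F2]
      exact ⟨⟨hp, hsymp⟩, not_or.2 ⟨hnot, hmem⟩⟩
    exact card_isotropicAbove hj (sup_span_singleton_mem_Lset huw hw'')
  · rw [Nat.cast_eq_zero, card_eq_zero, eq_empty_iff_forall_notMem]
    intro z hz
    rw [mem_isotropicAbove_sup_span_singleton, mem_isotropicAbove_sup_span_singleton,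
      mem_isotropicAbove] at hz
    exact hsymp (hz.1.1.1.1 w hz.1.2 w' hz.2)

theorem sum_add_mem_eq (hu : u ∈ Lset n j) {ψ : PV n → ℝ} (hinv : ∀ w, ∀ v ∈ u, ψ (w + v) = ψ w)
    (w : PV n) : ∑ w', (if w' + w ∈ u then ψ w' else 0) = 2 ^ j * ψ w := by
  rw [← Equiv.sum_comp (Equiv.addLeft w)]
  have hcancel : ∀ v, w + v + w = v := fun v ↦ by
    rw [add_right_comm, ZModModule.add_self, zero_add]
  simp only [Equiv.coe_addLeft, hcancel, ← sum_filter]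
  rw [sum_congr rfl fun v hv ↦ hinv w v (mem_filter.1 hv).2, sum_const, card_submodule_F2, hu.2,
    nsmul_eq_mul]
  norm_num

theorem sum_sq_sum_mem_le (hj : j + 2 ≤ n) (hu : u ∈ Lset n j) {ψ : PV n → ℝ}
    (hsupp : ∀ w ∉ extensionVectors u, ψ w = 0) (hinv : ∀ w, ∀ v ∈ u, ψ (w + v) = ψ w)
    (hsum : ∑ w, ψ w = 0) :
    ∑ x ∈ isotropicAbove n u, (∑ w with w ∈ x, ψ w) ^ 2 ≤
      isotropicCount n n (j + 2) * 2 ^ n * ∑ w, ψ w ^ 2 := by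
  set N₁ := isotropicCount n n (j + 1)
  set N₂ := isotropicCount n n (j + 2)
  have hcount : ∀ w w', ψ w * ψ w' * #(isotropicAbove n (u ⊔ F2 ∙ w ⊔ F2 ∙ w')) =
      N₂ * (if symp w w' = 0 then ψ w * ψ w' else 0) +
        (N₁ - N₂) * (ψ w * if w' + w ∈ u then ψ w' else 0) := fun w w' ↦ by
    by_cases hw : w ∈ extensionVectors u
    · by_cases hw' : w' ∈ extensionVectors u
      · rw [card_isotropicAbove_sup_sup hj hu hw hw']
        split_ifs <;> ring
      · simp [hsupp w' hw']
    · simp [hsupp w hw]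
  have hexpand : ∑ x ∈ isotropicAbove n u, (∑ w with w ∈ x, ψ w) ^ 2 =
      N₂ * ∑ w, ∑ w', (if symp w w' = 0 then ψ w * ψ w' else 0) +
        (N₁ - N₂) * (2 ^ j * ∑ w, ψ w ^ 2) := by
    simp only [sq, sum_mul_sum]
    rw [sum_isotropicAbove_sum_mem, mul_sum, mul_sum, mul_sum, ← sum_add_distrib]
    refine sum_congr rfl fun w _ ↦ ?_
    rw [sum_isotropicAbove_sum_mem, mul_left_comm (2 ^ j), ← sum_add_mem_eq hu hinv w, mul_sum,
      mul_sum, mul_sum, ← sum_add_distrib]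
    refine sum_congr rfl fun w' _ ↦ ?_
    rw [sum_const, nsmul_eq_mul, mul_comm, hcount]
  have hgap : (N₁ - N₂) * 2 ^ j = N₂ * (2 ^ n / 2) := by
    simp only [N₁, N₂, isotropicCount_lagrangian_step (show j + 1 < n by omega)]
    obtain ⟨d, rfl⟩ := Nat.exists_eq_add_of_le hj
    rw [show j + 2 + d - (j + 1) = d + 1 by omega]
    ring
  have hN₂ : 0 ≤ N₂ := (isotropicCount_pos le_rfl).le
  rw [hexpand, ← mul_assoc, hgap]
  linarith [mul_le_mul_of_nonneg_left (sum_sum_commuting_mul_le hsum) hN₂]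

/-- The average of `F` over the Lagrangians containing `u`. -/
noncomputable def lagrangianAvg (F : Submodule F2 (PV n) → ℝ) (u : Submodule F2 (PV n)) : ℝ :=
  𝔼 x ∈ isotropicAbove n u, F x

theorem isotropicCount_mul_lagrangianAvg (hu : u ∈ Lset n j) (F : Submodule F2 (PV n) → ℝ) :
    isotropicCount n n j * lagrangianAvg F u = ∑ x ∈ isotropicAbove n u, F x := by
  rw [← card_isotropicAbove (hu.2 ▸ hu.1.finrank_le) hu, lagrangianAvg, card_mul_expect]

theorem abs_lagrangianAvg_le_one (hF : ∀ x, |F x| ≤ 1) (u : Submodule F2 (PV n)) :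
    |lagrangianAvg F u| ≤ 1 := by
  rw [lagrangianAvg]
  obtain h | h := (isotropicAbove n u).eq_empty_or_nonempty
  · simp [h]
  · exact (abs_expect_le _ _).trans (expect_le h fun x _ ↦ hF x)

theorem sum_extensionVectors_lagrangianAvg (hj : j < n) (hu : u ∈ Lset n j)
    (F : Submodule F2 (PV n) → ℝ) :
    ∑ w ∈ extensionVectors u, lagrangianAvg F (u ⊔ F2 ∙ w) =
      #(extensionVectors u) * lagrangianAvg F u := by
  have hN := isotropicCount_pos (j := j + 1) le_rfl (n := n)
  refine mul_left_cancel₀ hN.ne' ?_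
  rw [mul_sum, sum_congr rfl fun w hw ↦
      isotropicCount_mul_lagrangianAvg (sup_span_singleton_mem_Lset hu hw) F,
    sum_extensionVectors_sum_isotropicAbove hu, ← isotropicCount_mul_lagrangianAvg hu,
    card_extensionVectors hu, ← mul_assoc, isotropicCount_step hj]
  ring

/-- The change of the average of `F` when `u` is enlarged by `w`; zero if `u` and `w` do not span
a larger isotropic subspace. -/
noncomputable def deviation (F : Submodule F2 (PV n) → ℝ) (u : Submodule F2 (PV n)) (w : PV n) :
    ℝ :=
  if w ∈ extensionVectors u then lagrangianAvg F (u ⊔ F2 ∙ w) - lagrangianAvg F u else 0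

theorem deviation_of_notMem (hw : w ∉ extensionVectors u) : deviation F u w = 0 := if_neg hw

theorem lagrangianAvg_sup_span_singleton (hw : w ∈ extensionVectors u) :
    lagrangianAvg F (u ⊔ F2 ∙ w) = lagrangianAvg F u + deviation F u w := by
  rw [deviation, if_pos hw, add_sub_cancel]

theorem sum_extensionVectors_deviation (φ : PV n → ℝ) :
    ∑ w ∈ extensionVectors u, φ w * deviation F u w = ∑ w, φ w * deviation F u w :=
  sum_subset (subset_univ _) fun _ _ hw ↦ by rw [deviation_of_notMem hw, mul_zero]

theorem sum_deviation (hj : j < n) (hu : u ∈ Lset n j) : ∑ w, deviation F u w = 0 := by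
  have h := sum_extensionVectors_lagrangianAvg hj hu F
  rw [sum_congr rfl fun w hw ↦ lagrangianAvg_sup_span_singleton hw, sum_add_distrib, sum_const,
    nsmul_eq_mul, add_eq_left] at h
  rw [← h]
  exact (sum_subset (subset_univ _) fun w _ hw ↦ deviation_of_notMem hw).symm

theorem deviation_add_of_mem (hu : IsIsotropic u) (hv : v ∈ u) (w : PV n) :
    deviation F u (w + v) = deviation F u w := by
  simp only [deviation, mem_extensionVectors, sup_span_singleton_add_of_mem hv,
    (perp u).add_mem_iff_left (hu.le_perp hv), u.add_mem_iff_left hv]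

theorem sum_mul_sum_deviation (hj : j < n) (hu : u ∈ Lset n j) :
    ∑ x ∈ isotropicAbove n u, F x * ∑ w with w ∈ x, deviation F u w =
      isotropicCount n n (j + 1) * ∑ w, deviation F u w ^ 2 := by
  have hterm : ∀ w, (∑ x ∈ isotropicAbove n (u ⊔ F2 ∙ w), F x) * deviation F u w =
      isotropicCount n n (j + 1) * (lagrangianAvg F u * deviation F u w + deviation F u w ^ 2) := by
    intro w
    by_cases hw : w ∈ extensionVectors u
    · rw [← isotropicCount_mul_lagrangianAvg (sup_span_singleton_mem_Lset hu hw),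
        lagrangianAvg_sup_span_singleton hw]
      ring
    · simp [deviation_of_notMem hw]
  simp only [mul_sum]
  rw [sum_isotropicAbove_sum_mem]
  rw [sum_congr rfl fun w _ ↦ (sum_mul ..).symm.trans (hterm w), ← mul_sum, sum_add_distrib,
    ← mul_sum, sum_deviation hj hu, mul_zero, zero_add, mul_sum]

theorem sum_sq_deviation_le (hF : ∀ x, |F x| ≤ 1) (hj : j + 2 ≤ n) (hu : u ∈ Lset n j) :
    ∑ w, deviation F u w ^ 2 ≤ 2 * 2 ^ n := by
  set D := ∑ w, deviation F u w ^ 2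
  set N := isotropicCount n n
  have hN₁ : 0 < N (j + 1) := isotropicCount_pos le_rfl
  have hFsq : ∑ x ∈ isotropicAbove n u, F x ^ 2 ≤ N j := by
    simp only [N, ← card_isotropicAbove (show j ≤ n by omega) hu, ← nsmul_one, ← sum_const]
    exact sum_le_sum fun x _ ↦ (sq_le_one_iff_abs_le_one _).2 (hF x)
  have hcs := sum_mul_sq_le_sq_mul_sq (isotropicAbove n u) F fun x ↦ ∑ w with w ∈ x, deviation F u w
  rw [sum_mul_sum_deviation (by omega) hu] at hcs
  have hlin := sum_sq_sum_mem_le hj hu (fun w ↦ deviation_of_notMem (F := F))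
    (fun w v hv ↦ deviation_add_of_mem hu.1 hv w) (sum_deviation (by omega) hu)
  have hquad : N (j + 1) ^ 2 * (D * D) ≤ N (j + 1) ^ 2 * (2 * 2 ^ n * D) :=
    calc N (j + 1) ^ 2 * (D * D) = (N (j + 1) * D) ^ 2 := by ring
      _ ≤ N j * (N (j + 2) * 2 ^ n * D) :=
        hcs.trans (mul_le_mul hFsq hlin (sum_nonneg fun _ _ ↦ sq_nonneg _)
          (isotropicCount_pos le_rfl).le)
      _ = N j * N (j + 2) * (2 ^ n * D) := by ring
      _ ≤ 2 * N (j + 1) ^ 2 * (2 ^ n * D) :=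
        mul_le_mul_of_nonneg_right (isotropicCount_lagrangian_mul_le hj) (by positivity)
      _ = N (j + 1) ^ 2 * (2 * 2 ^ n * D) := by ring
  obtain hD | hD := (show 0 ≤ D by positivity).eq_or_lt
  · rw [← hD]; positivity
  · exact le_of_mul_le_mul_right (le_of_mul_le_mul_left hquad (by positivity)) hD

theorem sum_extensionVectors_sq_lagrangianAvg_le (hF : ∀ x, |F x| ≤ 1) (hj : j + 2 ≤ n)
    (hu : u ∈ Lset n j) :
    ∑ w ∈ extensionVectors u, lagrangianAvg F (u ⊔ F2 ∙ w) ^ 2 ≤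
      #(extensionVectors u) * (lagrangianAvg F u ^ 2 + 4 * 2 ^ j / 2 ^ n) := by
  have hsplit : ∑ w ∈ extensionVectors u, lagrangianAvg F (u ⊔ F2 ∙ w) ^ 2 =
      #(extensionVectors u) * lagrangianAvg F u ^ 2 + ∑ w, deviation F u w ^ 2 := by
    have hterm : ∀ w ∈ extensionVectors u, lagrangianAvg F (u ⊔ F2 ∙ w) ^ 2 =
        lagrangianAvg F u ^ 2 + (2 * lagrangianAvg F u + deviation F u w) * deviation F u w :=
      fun w hw ↦ by rw [lagrangianAvg_sup_span_singleton hw]; ring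
    rw [sum_congr rfl hterm, sum_add_distrib, sum_const, nsmul_eq_mul,
      sum_extensionVectors_deviation]
    simp only [add_mul, sum_add_distrib, ← mul_sum, sum_deviation (show j < n by omega) hu, ← sq,
      mul_zero, zero_add]
  have hcard : 2 * 2 ^ n ≤ (#(extensionVectors u) : ℝ) * (4 * 2 ^ j / 2 ^ n) := by
    rw [card_extensionVectors hu]
    obtain ⟨d, rfl⟩ := Nat.exists_eq_add_of_le hj
    rw [show 2 * (j + 2 + d) - j = j + 2 * d + 4 by omega, mul_div_assoc',
      le_div_iff₀ (by positivity)]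
    have hd : (1 : ℝ) ≤ (2 ^ d) ^ 2 := one_le_pow₀ (one_le_pow₀ one_le_two)
    have hc := mul_le_mul_of_nonneg_left hd (sq_nonneg ((2 : ℝ) ^ j))
    simp only [pow_add, pow_mul']
    nlinarith
  rw [hsplit, mul_add]
  linarith [sum_sq_deviation_le hF hj hu]

theorem sum_sq_lagrangianAvg_le (hF : ∀ x, |F x| ≤ 1) (hk : k + 1 ≤ n) (hjk : j ≤ k)
    (hu : u ∈ Lset n j) :
    ∑ z ∈ isotropicAbove k u, lagrangianAvg F z ^ 2 ≤
      isotropicCount n k j * (lagrangianAvg F u ^ 2 + 4 * (2 ^ k - 2 ^ j) / 2 ^ n) := by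
  induction hjk using Nat.decreasingInduction generalizing u with
  | self => simp [isotropicAbove_self hu, isotropicCount_self]
  | of_succ j hjk ih =>
    have hpos : (0 : ℝ) < 2 ^ k - 2 ^ j := sub_pos.2 (pow_lt_pow_right₀ one_lt_two hjk)
    have hK : 0 ≤ isotropicCount n k (j + 1) := (isotropicCount_pos (by omega)).le
    refine le_of_mul_le_mul_left ?_ hpos
    calc (2 ^ k - 2 ^ j) * ∑ z ∈ isotropicAbove k u, lagrangianAvg F z ^ 2
        = ∑ w ∈ extensionVectors u, ∑ z ∈ isotropicAbove k (u ⊔ F2 ∙ w), lagrangianAvg F z ^ 2 :=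
          (sum_extensionVectors_sum_isotropicAbove hu _).symm
      _ ≤ ∑ w ∈ extensionVectors u, isotropicCount n k (j + 1) *
            (lagrangianAvg F (u ⊔ F2 ∙ w) ^ 2 + 4 * (2 ^ k - 2 ^ (j + 1)) / 2 ^ n) :=
          sum_le_sum fun w hw ↦ ih (sup_span_singleton_mem_Lset hu hw)
      _ ≤ isotropicCount n k (j + 1) * (#(extensionVectors u) *
            (lagrangianAvg F u ^ 2 + 4 * 2 ^ j / 2 ^ n) +
              #(extensionVectors u) * (4 * (2 ^ k - 2 ^ (j + 1)) / 2 ^ n)) := by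
          rw [← mul_sum, sum_add_distrib, sum_const, nsmul_eq_mul]
          gcongr
          exact sum_extensionVectors_sq_lagrangianAvg_le hF (by omega) hu
      _ = #(extensionVectors u) * isotropicCount n k (j + 1) *
            (lagrangianAvg F u ^ 2 + 4 * (2 ^ k - 2 ^ j) / 2 ^ n) := by ring
      _ = _ := by rw [card_extensionVectors hu, ← isotropicCount_step hjk, mul_assoc]

end Variance

section Phase

variable {n : ℕ} (x y : PV n)

/-- The exponent `x̂₁·x̂₂` of `i` in the phase. -/
def selfDot (x : PV n) : ℤ := dotZ (liftZ x.1) (liftZ x.2)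

theorem neg_one_zpow_eq_signChar (m : ℤ) : (-1 : ℂ) ^ m = signChar (m : F2) := by
  obtain hm | hm := m.even_or_odd
  · rw [hm.neg_one_zpow, ZMod.intCast_eq_zero_iff_even.2 hm, AddChar.map_zero_eq_one,
      Complex.ofReal_one]
  · rw [hm.neg_one_zpow, ZMod.intCast_eq_one_iff_odd.2 hm, signChar_one, Complex.ofReal_neg,
      Complex.ofReal_one]

theorem cast_dotZ_liftZ (a b : Fin n → F2) : (dotZ (liftZ a) (liftZ b) : F2) = a ⬝ᵥ b := by
  simp [dotZ, liftZ, dotProduct]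

theorem ofReal_signChar_mul_self (a : F2) : (signChar a : ℂ) * signChar a = 1 := by
  rw [← Complex.ofReal_mul, signChar_mul_self, Complex.ofReal_one]

theorem I_zpow_sq (m : ℤ) : (Complex.I ^ m) ^ 2 = signChar (m : F2) := by
  rw [← neg_one_zpow_eq_signChar, ← zpow_natCast, zpow_comm, zpow_natCast, Complex.I_sq]

theorem phase_eq : phase x y = Complex.I ^ selfDot x * Complex.I ^ selfDot y *
    Complex.I ^ (-selfDot (x + y)) * signChar (x.2 ⬝ᵥ y.1) := by
  rw [← cast_dotZ_liftZ, ← neg_one_zpow_eq_signChar]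
  rfl

theorem phase_sq : phase x y ^ 2 = signChar (symp x y) := by
  have hexp : (selfDot x : F2) + selfDot y + selfDot (x + y) = symp x y := by
    simp only [selfDot, cast_dotZ_liftZ, dotProduct, symp, ← sum_add_distrib]
    refine sum_congr rfl fun i _ ↦ ?_
    simp only [Prod.fst_add, Prod.snd_add, Pi.add_apply]
    generalize x.1 i = a, x.2 i = b, y.1 i = c, y.2 i = d
    revert a b c d
    decide
  rw [phase_eq, mul_pow, mul_pow, mul_pow, I_zpow_sq, I_zpow_sq, I_zpow_sq, sq (signChar _ : ℂ),
    ofReal_signChar_mul_self, mul_one, Int.cast_neg, ZModModule.neg_eq_self, ← hexp]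
  simp only [AddChar.map_add_eq_mul, Complex.ofReal_mul]

variable {x y}

theorem re_phase_of_symp_eq_zero (h : symp x y = 0) : (phase x y).re = signChar (wght x y) := by
  have hsq := phase_sq x y
  rw [h, AddChar.map_zero_eq_one, Complex.ofReal_one, sq_eq_one_iff] at hsq
  obtain hphase | hphase := hsq <;> norm_num [wght, hphase, signChar_one]

theorem re_phase_of_symp_ne_zero (h : symp x y ≠ 0) : (phase x y).re = 0 := by
  have hsq := phase_sq x y
  rw [signChar_eq_ite, if_neg h, Complex.ofReal_neg, Complex.ofReal_one, ← Complex.I_sq,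
    sq_eq_sq_iff_eq_or_eq_neg] at hsq
  obtain hphase | hphase := hsq <;> simp [hphase]

theorem abs_re_phase_le_one (x y : PV n) : |(phase x y).re| ≤ 1 := by
  by_cases h : symp x y = 0
  · rw [re_phase_of_symp_eq_zero h, abs_signChar]
  · rw [re_phase_of_symp_ne_zero h, abs_zero]
    exact zero_le_one

theorem phase_self (x : PV n) : phase x x = 1 := by
  have hsum : selfDot (x + x) = 0 := by
    rw [ZModModule.add_self]
    simp [selfDot, dotZ, liftZ]
  rw [phase_eq, hsum, ← sq, I_zpow_sq, dotProduct_comm, ← cast_dotZ_liftZ, neg_zero, zpow_zero,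
    mul_one]
  exact ofReal_signChar_mul_self _

end Phase

section FrobeniusNorm

open scoped Matrix Matrix.Norms.Frobenius

theorem trace_conjTranspose_mul_self_eq_norm_sq {𝕜 ι κ : Type*} [RCLike 𝕜] [Fintype ι] [Fintype κ]
    (A : Matrix ι κ 𝕜) : (Aᴴ * A).trace = (‖A‖ ^ 2 : ℝ) := by
  have hnorm : ‖A‖ ^ 2 = ∑ j, ∑ i, ‖A i j‖ ^ 2 := by
    rw [Matrix.frobenius_norm_def, ← Real.sqrt_eq_rpow, Real.sq_sqrt (by positivity), sum_comm]
    simp only [Real.rpow_two]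
  simp only [hnorm, Matrix.trace, Matrix.diag_apply, Matrix.mul_apply, Matrix.conjTranspose_apply,
    RCLike.ofReal_sum, RCLike.ofReal_pow, RCLike.star_def, RCLike.conj_mul]

end FrobeniusNorm

section Pauli

open scoped Matrix Matrix.Norms.Frobenius

variable {n : ℕ}

/-- The Hermitian Pauli operator `i^{v̂₁·v̂₂} X^{v₁} Z^{v₂}`, as a matrix in the computational
basis. -/
noncomputable def pauli (v : PV n) : Matrix (Fin n → F2) (Fin n → F2) ℂ :=
  .of fun p q ↦ if p = q + v.1 then Complex.I ^ selfDot v * signChar (v.2 ⬝ᵥ q) else 0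

theorem pauli_mul (x y : PV n) : pauli x * pauli y = phase x y • pauli (x + y) := by
  have hphase : phase x y * Complex.I ^ selfDot (x + y) =
      Complex.I ^ selfDot x * Complex.I ^ selfDot y * signChar (x.2 ⬝ᵥ y.1) := by
    rw [phase_eq, zpow_neg]
    field_simp [zpow_ne_zero (selfDot (x + y)) Complex.I_ne_zero]
  ext p q
  rw [Matrix.mul_apply, sum_eq_single (q + y.1) (fun r _ hr ↦ by simp [pauli, hr]) (by simp)]
  simp only [pauli, Matrix.of_apply, Matrix.smul_apply, smul_eq_mul, mul_ite, mul_zero, if_true,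
    ite_mul, zero_mul, Prod.fst_add, Prod.snd_add, add_assoc q, add_comm y.1, ← mul_assoc, hphase]
  refine if_congr Iff.rfl ?_ rfl
  rw [dotProduct_add, add_dotProduct, AddChar.map_add_eq_mul, AddChar.map_add_eq_mul]
  push_cast
  ring

theorem pauli_isHermitian (v : PV n) : (pauli v).IsHermitian := by
  ext p q
  rw [Matrix.conjTranspose_apply]
  have hsymm : q = p + v.1 ↔ p = q + v.1 := by
    rw [← ZModModule.sub_eq_add q, eq_sub_iff_add_eq, eq_comm]
  simp only [pauli, Matrix.of_apply, hsymm]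
  split_ifs with h
  · have hconj : (-Complex.I) ^ selfDot v = signChar (v.2 ⬝ᵥ v.1) * Complex.I ^ selfDot v := by
      rw [dotProduct_comm, ← cast_dotZ_liftZ, ← neg_one_zpow_eq_signChar, ← selfDot, ← mul_zpow,
        neg_one_mul]
    rw [h, dotProduct_add, AddChar.map_add_eq_mul, star_mul', Complex.star_def, map_zpow₀,
      Complex.conj_I, Complex.conj_ofReal, hconj]
    push_cast
    linear_combination (Complex.I ^ selfDot v * signChar (v.2 ⬝ᵥ q)) *
      ofReal_signChar_mul_self (v.2 ⬝ᵥ v.1)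
  · exact star_zero ℂ

theorem sum_signChar_dotProduct (a : Fin n → F2) :
    ∑ q, signChar (a ⬝ᵥ q) = if a = 0 then 2 ^ n else 0 := by
  have hzero : (dotProductBilin F2 F2 a).toAddMonoidHom = 0 ↔ a = 0 := by
    refine ⟨fun h ↦ dotProduct_eq_zero a fun q ↦ DFunLike.congr_fun h q, ?_⟩
    rintro rfl
    rw [map_zero]
    rfl
  have hcard : Fintype.card (Fin n → F2) = 2 ^ n := by simp
  calc ∑ q, signChar (a ⬝ᵥ q)
      = if (dotProductBilin F2 F2 a).toAddMonoidHom = 0 then (Fintype.card (Fin n → F2) : ℝ)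
          else 0 := sum_signChar_comp (dotProductBilin F2 F2 a).toAddMonoidHom
    _ = if a = 0 then 2 ^ n else 0 := by simp only [hzero, hcard, Nat.cast_pow, Nat.cast_ofNat]

theorem trace_pauli (v : PV n) : (pauli v).trace = if v = 0 then 2 ^ n else 0 := by
  simp only [Matrix.trace, Matrix.diag_apply, pauli, Matrix.of_apply, left_eq_add, Prod.ext_iff,
    Prod.fst_zero, Prod.snd_zero]
  by_cases h₁ : v.1 = 0
  · have hdot : selfDot v = 0 := by simp [selfDot, dotZ, liftZ, h₁]
    simp only [h₁, hdot, if_true, true_and, zpow_zero, one_mul, ← Complex.ofReal_sum,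
      sum_signChar_dotProduct]
    split_ifs <;> simp
  · simp [h₁]

theorem trace_pauli_mul (x y : PV n) : (pauli x * pauli y).trace = if x = y then 2 ^ n else 0 := by
  have hadd : x + y = 0 ↔ x = y := by rw [← ZModModule.sub_eq_add, sub_eq_zero]
  simp only [pauli_mul, Matrix.trace_smul, trace_pauli, hadd]
  split_ifs with h
  · rw [h, phase_self, one_smul]
  · exact smul_zero _

/-- The operator with Pauli coefficients `c`. -/
noncomputable def pauliSum (c : PV n → ℂ) : Matrix (Fin n → F2) (Fin n → F2) ℂ :=
  ∑ v, c v • pauli v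

theorem norm_sq_pauliSum (c : PV n → ℂ) : ‖pauliSum c‖ ^ 2 = 2 ^ n * ∑ v, ‖c v‖ ^ 2 := by
  have htrace := trace_conjTranspose_mul_self_eq_norm_sq (pauliSum c)
  rw [← Complex.ofReal_inj]
  refine htrace.symm.trans ?_
  simp only [pauliSum, Matrix.conjTranspose_sum, Matrix.conjTranspose_smul, sum_mul_sum,
    (pauli_isHermitian _).eq, Matrix.smul_mul, Matrix.mul_smul, Matrix.trace_sum,
    Matrix.trace_smul, trace_pauli_mul, smul_eq_mul, mul_ite, mul_zero, sum_ite_eq, mem_univ,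
    if_true]
  push_cast
  rw [mul_sum]
  exact sum_congr rfl fun v _ ↦ by
    rw [← mul_assoc, Complex.star_def, Complex.mul_conj', mul_comm]

/-- The Pauli coefficients of the square of `pauliSum c`. -/
noncomputable def twistedConv (c : PV n → ℂ) (v : PV n) : ℂ :=
  ∑ x, c x * c (x + v) * phase x (x + v)

theorem pauliSum_mul_self (c : PV n → ℂ) : pauliSum c * pauliSum c = pauliSum (twistedConv c) := by
  simp only [pauliSum, twistedConv, sum_mul_sum, sum_smul]
  refine .trans (sum_congr rfl fun x _ ↦ ?_) sum_comm
  rw [← Equiv.sum_comp (Equiv.addLeft x)]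
  refine sum_congr rfl fun v _ ↦ ?_
  have hcancel : x + (x + v) = v := by rw [← add_assoc, ZModModule.add_self, zero_add]
  rw [Equiv.coe_addLeft, Matrix.smul_mul, Matrix.mul_smul, pauli_mul, hcancel, smul_smul,
    smul_smul]

theorem sum_sq_norm_twistedConv_le (c : PV n → ℂ) :
    ∑ v, ‖twistedConv c v‖ ^ 2 ≤ 2 ^ n * (∑ v, ‖c v‖ ^ 2) ^ 2 := by
  refine le_of_mul_le_mul_left (a := 2 ^ n) ?_ (by positivity)
  calc 2 ^ n * ∑ v, ‖twistedConv c v‖ ^ 2 = ‖pauliSum c * pauliSum c‖ ^ 2 := by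
        rw [pauliSum_mul_self, norm_sq_pauliSum]
    _ ≤ (‖pauliSum c‖ * ‖pauliSum c‖) ^ 2 := by
        gcongr
        exact Matrix.frobenius_norm_mul _ _
    _ = (‖pauliSum c‖ ^ 2) ^ 2 := by ring
    _ = 2 ^ n * (2 ^ n * (∑ v, ‖c v‖ ^ 2) ^ 2) := by
        rw [norm_sq_pauliSum]
        ring

/-- The real trilinear form `2⁻ⁿ Re tr H³` in the Pauli coefficients `b` of `H`. -/
noncomputable def phaseForm (b : PV n → ℝ) : ℝ :=
  ∑ x, ∑ y, b x * b y * b (x + y) * (phase x y).re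

theorem phaseForm_eq_sum_twistedConv (b : PV n → ℝ) :
    phaseForm b = ∑ v, b v * (twistedConv (fun v ↦ (b v : ℂ)) v).re := by
  simp only [phaseForm, twistedConv, Complex.re_sum, mul_sum]
  refine .trans (sum_congr rfl fun x _ ↦ ?_) sum_comm
  rw [← Equiv.sum_comp (Equiv.addLeft x)]
  refine sum_congr rfl fun v _ ↦ ?_
  have hcancel : x + (x + v) = v := by rw [← add_assoc, ZModModule.add_self, zero_add]
  rw [Equiv.coe_addLeft, hcancel, ← Complex.ofReal_mul, Complex.re_ofReal_mul]
  ring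

theorem sq_phaseForm_le (b : PV n → ℝ) : phaseForm b ^ 2 ≤ 2 ^ n * (∑ v, b v ^ 2) ^ 3 := by
  have hconv := sum_sq_norm_twistedConv_le fun v ↦ (b v : ℂ)
  simp only [Complex.norm_real, Real.norm_eq_abs, sq_abs] at hconv
  calc phaseForm b ^ 2
      ≤ (∑ v, b v ^ 2) * ∑ v, (twistedConv (fun v ↦ (b v : ℂ)) v).re ^ 2 := by
        rw [phaseForm_eq_sum_twistedConv]
        exact sum_mul_sq_le_sq_mul_sq _ _ _
    _ ≤ (∑ v, b v ^ 2) * ∑ v, ‖twistedConv (fun v ↦ (b v : ℂ)) v‖ ^ 2 := by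
        refine mul_le_mul_of_nonneg_left (sum_le_sum fun v _ ↦ ?_) (by positivity)
        exact sq_le_sq.2 ((Complex.abs_re_le_norm _).trans (le_abs_self _))
    _ ≤ (∑ v, b v ^ 2) * (2 ^ n * (∑ v, b v ^ 2) ^ 2) := by gcongr
    _ = 2 ^ n * (∑ v, b v ^ 2) ^ 3 := by ring

theorem sum_sq_le_four_pow {b : PV n → ℝ} (hb : ∀ v, |b v| ≤ 1) : ∑ v, b v ^ 2 ≤ 4 ^ n :=
  calc ∑ v, b v ^ 2 ≤ ∑ _v : PV n, (1 : ℝ) :=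
        sum_le_sum fun v _ ↦ (sq_le_one_iff_abs_le_one _).2 (hb v)
    _ = 4 ^ n := by rw [sum_const, card_univ, card_PV, nsmul_one, Nat.cast_pow, Nat.cast_ofNat]

theorem sq_sqrt_two_pow (m : ℕ) : (√2 ^ m) ^ 2 = 2 ^ m := by
  rw [← pow_mul, mul_comm, pow_mul, Real.sq_sqrt two_pos.le]

theorem four_pow_eq (m : ℕ) : (4 : ℝ) ^ m = 2 ^ (2 * m) := by
  rw [pow_mul]
  norm_num

theorem phaseForm_le {b : PV n → ℝ} (hb : ∀ v, |b v| ≤ 1) : phaseForm b ≤ √2 ^ (7 * n) := by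
  refine le_of_sq_le_sq ?_ (by positivity)
  calc phaseForm b ^ 2 ≤ 2 ^ n * (∑ v, b v ^ 2) ^ 3 := sq_phaseForm_le b
    _ ≤ 2 ^ n * (4 ^ n) ^ 3 := by
        gcongr
        exact sum_sq_le_four_pow hb
    _ = (√2 ^ (7 * n)) ^ 2 := by
        rw [sq_sqrt_two_pow, four_pow_eq]
        ring

end Pauli

section SignedValue

variable {n : ℕ}

/-- A candidate outcome for every subspace; only the values on Lagrangians matter. -/
abbrev OutcomeFamily (n : ℕ) := (S : Submodule F2 (PV n)) → (S → F2)

/-- The family assigns an outcome to every maximal isotropic subspace. -/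
def OutcomeFamily.IsValid (f : OutcomeFamily n) : Prop := ∀ S ∈ Lset n n, IsOutcome S (f S)

/-- The sign `(-1)^{f_x(v)}`, extended by zero to `v ∉ x`. -/
noncomputable def signedValue (f : OutcomeFamily n) (v : PV n) (x : Submodule F2 (PV n)) : ℝ :=
  if h : v ∈ x then signChar (f x ⟨v, h⟩) else 0

variable {f : OutcomeFamily n} {x : Submodule F2 (PV n)} {a b v : PV n}

theorem signedValue_of_mem (h : v ∈ x) : signedValue f v x = signChar (f x ⟨v, h⟩) := dif_pos h

theorem signedValue_of_notMem (h : v ∉ x) : signedValue f v x = 0 := dif_neg h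

theorem signedValue_mul_self (h : v ∈ x) : signedValue f v x * signedValue f v x = 1 := by
  rw [signedValue_of_mem h, signChar_mul_self]

theorem abs_signedValue_le_one (x : Submodule F2 (PV n)) : |signedValue f v x| ≤ 1 := by
  by_cases h : v ∈ x
  · rw [signedValue_of_mem h, abs_signChar]
  · rw [signedValue_of_notMem h, abs_zero]
    exact zero_le_one

theorem signedValue_mul (hf : f.IsValid) (hx : x ∈ Lset n n) (ha : a ∈ x) (hb : b ∈ x) :
    signedValue f a x * signedValue f b x = (phase a b).re * signedValue f (a + b) x := by
  have hsum : f x ⟨a + b, x.add_mem ha hb⟩ = f x ⟨a, ha⟩ + f x ⟨b, hb⟩ + wght a b :=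
    hf x hx ⟨a, ha⟩ ⟨b, hb⟩
  rw [signedValue_of_mem ha, signedValue_of_mem hb, signedValue_of_mem (x.add_mem ha hb), hsum,
    re_phase_of_symp_eq_zero (hx.1 a ha b hb), AddChar.map_add_eq_mul, AddChar.map_add_eq_mul]
  linear_combination -(signChar (f x ⟨a, ha⟩) * signChar (f x ⟨b, hb⟩)) *
    signChar_mul_self (wght a b)

end SignedValue

section Bias

variable {n : ℕ} {f : OutcomeFamily n} {a b v : PV n}

/-- The average sign given to `v` by the Lagrangians containing it. At `v = 0` it is set to `0`,
since this vector carries no information about `f`. -/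
noncomputable def bias (f : OutcomeFamily n) (v : PV n) : ℝ :=
  if v = 0 then 0 else lagrangianAvg (signedValue f v) (F2 ∙ v)

theorem bias_zero (f : OutcomeFamily n) : bias f 0 = 0 := if_pos rfl

theorem bias_of_ne_zero (hv : v ≠ 0) : bias f v = lagrangianAvg (signedValue f v) (F2 ∙ v) :=
  if_neg hv

theorem abs_bias_le_one (f : OutcomeFamily n) (v : PV n) : |bias f v| ≤ 1 := by
  by_cases hv : v = 0
  · rw [hv, bias_zero, abs_zero]
    exact zero_le_one
  · rw [bias_of_ne_zero hv]
    exact abs_lagrangianAvg_le_one abs_signedValue_le_one _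

theorem sum_signedValue (f : OutcomeFamily n) (hv : v ≠ 0) :
    ∑ x ∈ isotropicAbove n ⊥, signedValue f v x = isotropicCount n n 1 * bias f v := by
  rw [bias_of_ne_zero hv, isotropicCount_mul_lagrangianAvg (span_singleton_mem_Lset hv)]
  refine sum_isotropicAbove_bot fun x hx ↦ signedValue_of_notMem fun h ↦ hx ?_
  rwa [Submodule.span_singleton_le_iff_mem]

theorem sum_signedValue_mul_self (f : OutcomeFamily n) (hv : v ≠ 0) :
    ∑ x ∈ isotropicAbove n ⊥, signedValue f v x * signedValue f v x = isotropicCount n n 1 := by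
  have hL : F2 ∙ v ∈ Lset n 1 := span_singleton_mem_Lset hv
  rw [← card_isotropicAbove (hL.2 ▸ hL.1.finrank_le) hL, ← nsmul_one, ← sum_const]
  refine (sum_isotropicAbove_bot fun x hx ↦ ?_).trans (sum_congr rfl fun x hx ↦ ?_)
  · rw [Submodule.span_singleton_le_iff_mem] at hx
    rw [signedValue_of_notMem hx, zero_mul]
  · exact signedValue_mul_self (mem_isotropicAbove_span_singleton.1 hx).2

theorem sum_signedValue_mul_of_symp_ne_zero (f : OutcomeFamily n) (h : symp a b ≠ 0) :
    ∑ x ∈ isotropicAbove n ⊥, signedValue f a x * signedValue f b x = 0 := by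
  refine sum_eq_zero fun x hx ↦ ?_
  have hxL := mem_isotropicAbove_bot.1 hx
  by_cases ha : a ∈ x
  · rw [signedValue_of_notMem fun hb ↦ h (hxL.1 a ha b hb), mul_zero]
  · rw [signedValue_of_notMem ha, zero_mul]

theorem sum_signedValue_mul_of_symp_eq_zero (hf : f.IsValid) (ha : a ≠ 0) (hb : b ≠ 0)
    (hab : a ≠ b) (h : symp a b = 0) :
    ∑ x ∈ isotropicAbove n ⊥, signedValue f a x * signedValue f b x =
      isotropicCount n n 2 * ((phase a b).re *
        (bias f (a + b) + deviation (signedValue f (a + b)) (F2 ∙ (a + b)) a)) := by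
  have hadd : a + b ≠ 0 := by rwa [← ZModModule.sub_eq_add, sub_ne_zero]
  have hext := mem_extensionVectors_span_singleton_add ha hb h
  have hle : ∀ x, F2 ∙ (a + b) ⊔ F2 ∙ a ≤ x ↔ a ∈ x ∧ b ∈ x := fun x ↦ by
    simp only [sup_le_iff, Submodule.span_singleton_le_iff_mem]
    exact and_comm.trans (and_congr_right fun hax ↦ x.add_mem_iff_right hax)
  rw [bias_of_ne_zero hadd, ← lagrangianAvg_sup_span_singleton hext, mul_left_comm,
    isotropicCount_mul_lagrangianAvg
      (sup_span_singleton_mem_Lset (span_singleton_mem_Lset hadd) hext), mul_sum]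
  refine (sum_isotropicAbove_bot fun x hx ↦ ?_).trans (sum_congr rfl fun x hx ↦ ?_)
  · obtain hx | hx := not_and_or.1 (mt (hle x).2 hx) <;>
      simp only [signedValue_of_notMem hx, zero_mul, mul_zero]
  · obtain ⟨hxL, hx⟩ := mem_isotropicAbove.1 hx
    exact signedValue_mul hf hxL ((hle x).1 hx).1 ((hle x).1 hx).2

theorem bias_mul_bias_mul_sum_le (hf : f.IsValid) (a b : PV n) :
    bias f a * bias f b * ∑ x ∈ isotropicAbove n ⊥, signedValue f a x * signedValue f b x ≤
      (if a = b then isotropicCount n n 1 * bias f a ^ 2 else 0) + isotropicCount n n 2 *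
        (bias f a * bias f b * bias f (a + b) * (phase a b).re +
          |deviation (signedValue f (a + b)) (F2 ∙ (a + b)) a|) := by
  have hN₁ : 0 < isotropicCount n n 1 := isotropicCount_pos le_rfl
  have hN₂ : 0 < isotropicCount n n 2 := isotropicCount_pos le_rfl
  by_cases ha : a = 0
  · rw [ha, bias_zero]
    simp only [zero_mul]
    positivity
  by_cases hb : b = 0
  · rw [hb, bias_zero]
    simp only [mul_zero, zero_mul]
    positivity
  by_cases hab : a = b
  · rw [← hab, sum_signedValue_mul_self f ha, if_pos rfl, ZModModule.add_self, bias_zero, mul_zero,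
      zero_mul, zero_add, ← sq, mul_comm]
    exact le_add_of_nonneg_right (by positivity)
  rw [if_neg hab, zero_add]
  by_cases h : symp a b = 0
  · rw [sum_signedValue_mul_of_symp_eq_zero hf ha hb hab h, mul_left_comm, mul_add, mul_add,
      ← mul_assoc, mul_right_comm _ (phase a b).re, ← mul_assoc]
    gcongr
    refine (le_abs_self _).trans ?_
    rw [abs_mul, abs_mul, abs_mul]
    exact mul_le_of_le_one_left (abs_nonneg _) (mul_le_one₀ (mul_le_one₀ (abs_bias_le_one f a)
      (abs_nonneg _) (abs_bias_le_one f b)) (abs_nonneg _) (abs_re_phase_le_one a b))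
  · rw [sum_signedValue_mul_of_symp_ne_zero f h, re_phase_of_symp_ne_zero h, mul_zero, mul_zero,
      zero_add]
    positivity

theorem sum_abs_deviation_le {F : Submodule F2 (PV n) → ℝ} {u : Submodule F2 (PV n)} {j : ℕ}
    (hF : ∀ x, |F x| ≤ 1) (hj : j + 2 ≤ n) (hu : u ∈ Lset n j) :
    ∑ w, |deviation F u w| ≤ √2 ^ (3 * n + 1) := by
  refine le_of_sq_le_sq ?_ (by positivity)
  calc (∑ w, |deviation F u w|) ^ 2
      ≤ 4 ^ n * ∑ w, deviation F u w ^ 2 := by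
        have hcs := sq_sum_le_card_mul_sum_sq (s := univ) (f := fun w ↦ |deviation F u w|)
        simpa only [card_univ, card_PV, Nat.cast_pow, Nat.cast_ofNat, sq_abs] using hcs
    _ ≤ 4 ^ n * (2 * 2 ^ n) := by
        gcongr
        exact sum_sq_deviation_le hF hj hu
    _ = (√2 ^ (3 * n + 1)) ^ 2 := by
        rw [sq_sqrt_two_pow, four_pow_eq]
        ring

/-- The correlation of the outcomes chosen on `x` with the biases. -/
noncomputable def biasCorrelation (f : OutcomeFamily n) (x : Submodule F2 (PV n)) : ℝ :=
  ∑ v, bias f v * signedValue f v x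

theorem sum_biasCorrelation (f : OutcomeFamily n) :
    ∑ x ∈ isotropicAbove n ⊥, biasCorrelation f x = isotropicCount n n 1 * ∑ v, bias f v ^ 2 := by
  simp only [biasCorrelation]
  rw [sum_comm, mul_sum]
  refine sum_congr rfl fun v _ ↦ ?_
  rw [← mul_sum]
  by_cases hv : v = 0
  · rw [hv, bias_zero]
    ring
  · rw [sum_signedValue f hv]
    ring

theorem sum_sum_abs_deviation_le (hn : 3 ≤ n) (f : OutcomeFamily n) :
    ∑ a, ∑ b, |deviation (signedValue f (a + b)) (F2 ∙ (a + b)) a| ≤ √2 ^ (7 * n + 1) := by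
  calc ∑ a, ∑ b, |deviation (signedValue f (a + b)) (F2 ∙ (a + b)) a|
      = ∑ c, ∑ a, |deviation (signedValue f c) (F2 ∙ c) a| := by
        refine .trans (sum_congr rfl fun a _ ↦ ?_) sum_comm
        exact Equiv.sum_comp (Equiv.addLeft a) fun c ↦ |deviation (signedValue f c) (F2 ∙ c) a|
    _ ≤ ∑ _c : PV n, √2 ^ (3 * n + 1) := by
        refine sum_le_sum fun c _ ↦ sum_abs_deviation_le (j := Module.finrank F2 (F2 ∙ c))
          abs_signedValue_le_one ?_ ⟨.span_singleton c, rfl⟩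
        linarith [finrank_span_singleton_F2_le_one c]
    _ = √2 ^ (7 * n + 1) := by
        rw [sum_const, card_univ, card_PV, nsmul_eq_mul, Nat.cast_pow, Nat.cast_ofNat,
          four_pow_eq, ← sq_sqrt_two_pow]
        ring

theorem sum_sq_biasCorrelation_le (hn : 3 ≤ n) (hf : f.IsValid) :
    ∑ x ∈ isotropicAbove n ⊥, biasCorrelation f x ^ 2 ≤ isotropicCount n n 1 * ∑ v, bias f v ^ 2 +
      isotropicCount n n 2 * (√2 ^ (7 * n) + √2 ^ (7 * n + 1)) := by
  calc ∑ x ∈ isotropicAbove n ⊥, biasCorrelation f x ^ 2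
      = ∑ a, ∑ b, bias f a * bias f b *
          ∑ x ∈ isotropicAbove n ⊥, signedValue f a x * signedValue f b x := by
        simp only [biasCorrelation, sq, sum_mul_sum]
        rw [sum_comm]
        refine sum_congr rfl fun a _ ↦ ?_
        rw [sum_comm]
        refine sum_congr rfl fun b _ ↦ ?_
        rw [mul_sum]
        exact sum_congr rfl fun x _ ↦ mul_mul_mul_comm _ _ _ _
    _ ≤ isotropicCount n n 1 * ∑ v, bias f v ^ 2 + isotropicCount n n 2 * (phaseForm (bias f) +
          ∑ a, ∑ b, |deviation (signedValue f (a + b)) (F2 ∙ (a + b)) a|) := by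
        refine (sum_le_sum fun a _ ↦ sum_le_sum fun b _ ↦
          bias_mul_bias_mul_sum_le hf a b).trans_eq ?_
        simp only [phaseForm, sum_add_distrib, ← mul_sum, sum_ite_eq, mem_univ, if_true]
    _ ≤ _ := by
        have hN : 0 ≤ isotropicCount n n 2 := (isotropicCount_pos le_rfl).le
        gcongr
        exacts [phaseForm_le (abs_bias_le_one f), sum_sum_abs_deviation_le hn f]

theorem isotropicCount_mul_sum_sq_bias_le (hn : 2 ≤ n) (f : OutcomeFamily n) :
    isotropicCount n n 1 * ∑ v, bias f v ^ 2 ≤ isotropicCount n n 2 * √2 ^ (6 * n) := by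
  have hN₂ : 0 < isotropicCount n n 2 := isotropicCount_pos le_rfl
  have hstep : isotropicCount n n 1 ≤ isotropicCount n n 2 * 2 ^ n := by
    rw [isotropicCount_lagrangian_step (by omega), mul_comm]
    gcongr
    obtain ⟨d, rfl⟩ := Nat.exists_eq_add_of_le' (show 1 ≤ n by omega)
    have := one_le_pow₀ (n := d) (one_le_two (α := ℝ))
    rw [Nat.add_sub_cancel, pow_succ]
    linarith
  calc isotropicCount n n 1 * ∑ v, bias f v ^ 2
      ≤ isotropicCount n n 2 * 2 ^ n * 4 ^ n := by
        gcongr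
        exact sum_sq_le_four_pow (abs_bias_le_one f)
    _ = isotropicCount n n 2 * √2 ^ (6 * n) := by
        rw [four_pow_eq, ← sq_sqrt_two_pow, ← sq_sqrt_two_pow]
        ring

theorem sq_sum_sq_bias_le (hn : 3 ≤ n) (hf : f.IsValid) :
    (∑ v, bias f v ^ 2) ^ 2 ≤ 8 * √2 ^ (7 * n) := by
  set E := ∑ v, bias f v ^ 2
  set N := isotropicCount n n
  set Q := √2 ^ (7 * n) with hQ
  have hN₀ : 0 < N 0 := isotropicCount_pos le_rfl
  have hN₁ : 0 < N 1 := isotropicCount_pos le_rfl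
  have hN₂ : 0 < N 2 := isotropicCount_pos le_rfl
  have hdiag : N 1 * E ≤ N 2 * Q := by
    refine (isotropicCount_mul_sum_sq_bias_le (by omega) f).trans ?_
    refine mul_le_mul_of_nonneg_left (pow_le_pow_right₀ ?_ (by omega)) hN₂.le
    exact Real.one_le_sqrt.2 one_le_two
  have hsecond : ∑ x ∈ isotropicAbove n ⊥, biasCorrelation f x ^ 2 ≤ N 2 * (4 * Q) := by
    have h := sum_sq_biasCorrelation_le hn hf
    have hsqrt : √2 ^ (7 * n + 1) ≤ 2 * Q := by
      rw [pow_succ', ← hQ]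
      gcongr
      rw [Real.sqrt_le_left two_pos.le]
      norm_num
    linarith [mul_le_mul_of_nonneg_left hsqrt hN₂.le]
  have hcs := sq_sum_le_card_mul_sum_sq (s := isotropicAbove n ⊥) (f := biasCorrelation f)
  rw [sum_biasCorrelation, card_isotropicAbove n.zero_le bot_mem_Lset] at hcs
  have hE : N 1 ^ 2 * E ^ 2 ≤ N 1 ^ 2 * (8 * Q) :=
    calc N 1 ^ 2 * E ^ 2 = (N 1 * E) ^ 2 := by ring
      _ ≤ N 0 * (N 2 * (4 * Q)) := hcs.trans (mul_le_mul_of_nonneg_left hsecond hN₀.le)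
      _ = N 0 * N 2 * (4 * Q) := by ring
      _ ≤ 2 * N 1 ^ 2 * (4 * Q) :=
        mul_le_mul_of_nonneg_right (isotropicCount_lagrangian_mul_le (by omega)) (by positivity)
      _ = N 1 ^ 2 * (8 * Q) := by ring
  exact le_of_mul_le_mul_left hE (by positivity)

end Bias

section Pairs

variable {n k : ℕ}

open Classical in
/-- The pairs of Lagrangians meeting in dimension `k`: the question pairs of the game `Z_k`. -/
noncomputable def pairsMeetingIn (n k : ℕ) : Finset (Submodule F2 (PV n) × Submodule F2 (PV n)) :=
  {p | p.1 ∈ Lset n n ∧ p.2 ∈ Lset n n ∧ Module.finrank F2 ↥(p.1 ⊓ p.2) = k}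

open Classical in
/-- The question pairs of the game `Z_k` on which the strategies `f` and `g` win. -/
noncomputable def consistentPairs (k : ℕ) (f g : OutcomeFamily n) :
    Finset (Submodule F2 (PV n) × Submodule F2 (PV n)) :=
  {p ∈ pairsMeetingIn n k | ConsistentOn (f p.1) (g p.2)}

theorem mem_pairsMeetingIn {p : Submodule F2 (PV n) × Submodule F2 (PV n)} :
    p ∈ pairsMeetingIn n k ↔
      p.1 ∈ Lset n n ∧ p.2 ∈ Lset n n ∧ Module.finrank F2 ↥(p.1 ⊓ p.2) = k := by
  simp only [pairsMeetingIn, mem_filter_univ]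

theorem mem_consistentPairs {f g : OutcomeFamily n}
    {p : Submodule F2 (PV n) × Submodule F2 (PV n)} :
    p ∈ consistentPairs k f g ↔ p.1 ∈ Lset n n ∧ p.2 ∈ Lset n n ∧
      Module.finrank F2 ↥(p.1 ⊓ p.2) = k ∧ ConsistentOn (f p.1) (g p.2) := by
  simp only [consistentPairs, mem_filter, mem_pairsMeetingIn, and_assoc]

theorem sum_pairsMeetingIn (φ : Submodule F2 (PV n) × Submodule F2 (PV n) → ℝ) :
    ∑ p ∈ pairsMeetingIn n k, φ p = ∑ z ∈ isotropicAbove k ⊥, ∑ x ∈ isotropicAbove n z,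
      ∑ y ∈ transversals x z, φ (x, y) := by
  have hmaps : ∀ p ∈ pairsMeetingIn n k, p.1 ⊓ p.2 ∈ isotropicAbove k ⊥ := fun p hp ↦ by
    obtain ⟨hx, -, hk⟩ := mem_pairsMeetingIn.1 hp
    exact mem_isotropicAbove_bot.2 ⟨hx.1.mono inf_le_left, hk⟩
  rw [← sum_fiberwise_of_maps_to hmaps]
  refine sum_congr rfl fun z hz ↦ ?_
  refine sum_finset_product' _ _ (fun x ↦ transversals x z) (fun p ↦ ?_) (f := fun x y ↦ φ (x, y))
  rw [mem_filter, mem_pairsMeetingIn, mem_isotropicAbove, mem_transversals]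
  constructor
  · rintro ⟨⟨hx, hy, -⟩, rfl⟩
    exact ⟨⟨hx, inf_le_left⟩, ⟨hy, inf_le_right⟩, (inf_eq_right.2 inf_le_left).symm⟩
  · rintro ⟨⟨hx, hzx⟩, ⟨hy, -⟩, h⟩
    rw [inf_eq_right.2 hzx] at h
    exact ⟨⟨hx, hy, h ▸ (mem_isotropicAbove_bot.1 hz).2⟩, h⟩

theorem isotropicCount_mul_sq_le_card_pairsMeetingIn (hk : k ≤ n) :
    isotropicCount n k 0 * isotropicCount n n k ^ 2 ≤ 3 * #(pairsMeetingIn n k) := by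
  have hcard : (#(pairsMeetingIn n k) : ℝ) = ∑ z ∈ isotropicAbove (n := n) k ⊥,
      ∑ x ∈ isotropicAbove n z, (#(transversals x z) : ℝ) := by
    rw [← nsmul_one, ← sum_const, sum_pairsMeetingIn]
    simp only [sum_const, nsmul_one]
  rw [hcard, ← card_isotropicAbove k.zero_le bot_mem_Lset, ← nsmul_eq_mul, mul_sum]
  refine card_nsmul_le_sum _ _ _ fun z hz ↦ ?_
  have hz := mem_isotropicAbove_bot.1 hz
  rw [sq]
  nth_rw 1 [← card_isotropicAbove hk hz]
  rw [← nsmul_eq_mul, mul_sum]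
  exact card_nsmul_le_sum _ _ _ fun x hx ↦
    isotropicCount_le_card_transversals (mem_isotropicAbove.1 hx).1 hz

section Agreement

variable {f g : OutcomeFamily n} {x y z : Submodule F2 (PV n)}

-- The cocycle `wght` cancels, so `v ↦ f_x(v) + g_y(v)` is additive and its signs sum to
-- `2 ^ dim z` or to `0`.
theorem sum_signedValue_mul_signedValue_nonneg (hf : f.IsValid) (hg : g.IsValid)
    (hx : x ∈ Lset n n) (hy : y ∈ Lset n n) (hzx : z ≤ x) (hzy : z ≤ y) :
    0 ≤ ∑ v with v ∈ z, signedValue f v x * signedValue g v y := by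
  let d : z →+ F2 := AddMonoidHom.mk' (fun v ↦ f x ⟨v, hzx v.2⟩ + g y ⟨v, hzy v.2⟩) fun v w ↦ by
    have hfx := hf x hx ⟨v, hzx v.2⟩ ⟨w, hzx w.2⟩
    have hgy := hg y hy ⟨v, hzy v.2⟩ ⟨w, hzy w.2⟩
    simp only [AddMemClass.mk_add_mk, Submodule.coe_add] at hfx hgy ⊢
    rw [hfx, hgy]
    linear_combination ZModModule.add_self (wght (v : PV n) (w : PV n))
  have hsum : ∑ v with v ∈ z, signedValue f v x * signedValue g v y = ∑ v, signChar (d v) := by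
    rw [sum_subtype (p := (· ∈ z)) _ fun v ↦ mem_filter_univ v]
    refine sum_congr rfl fun v _ ↦ ?_
    rw [signedValue_of_mem (hzx v.2), signedValue_of_mem (hzy v.2), ← AddChar.map_add_eq_mul]
    rfl
  rw [hsum, sum_signChar_comp]
  positivity

theorem ConsistentOn.sum_signedValue_mul_signedValue (h : ConsistentOn (f x) (g y)) (hzx : z ≤ x)
    (hzy : z ≤ y) :
    ∑ v with v ∈ z, signedValue f v x * signedValue g v y = 2 ^ Module.finrank F2 z := by
  have hcard : ((2 ^ Module.finrank F2 z : ℕ) : ℝ) = 2 ^ Module.finrank F2 z := by push_cast; rfl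
  rw [← hcard, ← card_submodule_F2, ← nsmul_one, ← sum_const]
  refine sum_congr rfl fun v hv ↦ ?_
  have hv := (mem_filter.1 hv).2
  rw [signedValue_of_mem (hzx hv), signedValue_of_mem (hzy hv), h v (hzx hv) (hzy hv),
    signChar_mul_self]

end Agreement

/-- The total energy of the averaged signs `f_x(v)`, `v ∈ z`, over the isotropic `z` of
dimension `k` when `x` ranges over the Lagrangians above `z`: by Cauchy-Schwarz it controls the
winning probability of `f` in the game `Z_k`. -/
noncomputable def energy (k : ℕ) (f : OutcomeFamily n) : ℝ :=
  ∑ z ∈ isotropicAbove k ⊥, ∑ v with v ∈ z, lagrangianAvg (signedValue f v) z ^ 2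

theorem two_pow_mul_card_consistentPairs_le {f g : OutcomeFamily n} (hf : f.IsValid)
    (hg : g.IsValid) : 2 ^ k * (#(consistentPairs k f g) : ℝ) ≤
      isotropicCount n n k ^ 2 * ((energy k f + energy k g) / 2) := by
  have htest : 2 ^ k * (#(consistentPairs k f g) : ℝ) ≤ ∑ p ∈ pairsMeetingIn n k,
      ∑ v with v ∈ p.1 ⊓ p.2, signedValue f v p.1 * signedValue g v p.2 := by
    rw [consistentPairs, mul_comm, ← nsmul_eq_mul, ← sum_const, sum_filter]
    refine sum_le_sum fun p hp ↦ ?_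
    obtain ⟨hx, hy, hk⟩ := mem_pairsMeetingIn.1 hp
    split_ifs with h
    · rw [h.sum_signedValue_mul_signedValue inf_le_left inf_le_right, hk]
    · exact sum_signedValue_mul_signedValue_nonneg hf hg hx hy inf_le_left inf_le_right
  refine htest.trans ?_
  rw [sum_pairsMeetingIn, energy, energy, ← sum_add_distrib, sum_div, mul_sum]
  refine sum_le_sum fun z hz ↦ ?_
  have hz := mem_isotropicAbove_bot.1 hz
  calc ∑ x ∈ isotropicAbove n z, ∑ y ∈ transversals x z,
        ∑ v with v ∈ x ⊓ y, signedValue f v x * signedValue g v y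
      ≤ ∑ x ∈ isotropicAbove n z, ∑ y ∈ isotropicAbove n z,
        ∑ v with v ∈ z, signedValue f v x * signedValue g v y := by
        refine sum_le_sum fun x hx ↦ ?_
        obtain ⟨hx, hzx⟩ := mem_isotropicAbove.1 hx
        refine (sum_congr rfl fun y hy ↦ ?_).trans_le
          (sum_le_sum_of_subset_of_nonneg (filter_subset _ _) fun y hy _ ↦ ?_)
        · rw [(mem_transversals.1 hy).2, inf_eq_right.2 hzx]
        · obtain ⟨hy, hzy⟩ := mem_isotropicAbove.1 hy
          exact sum_signedValue_mul_signedValue_nonneg hf hg hx hy hzx hzy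
    _ = ∑ v with v ∈ z, (∑ x ∈ isotropicAbove n z, signedValue f v x) *
        ∑ y ∈ isotropicAbove n z, signedValue g v y := by
        simp only [sum_mul_sum, sum_comm (s := isotropicAbove n z) (t := {v | v ∈ z})]
    _ ≤ _ := by
        rw [← sum_add_distrib, sum_div, mul_sum]
        refine sum_le_sum fun v _ ↦ ?_
        rw [← isotropicCount_mul_lagrangianAvg hz, ← isotropicCount_mul_lagrangianAvg hz,
          mul_mul_mul_comm, ← sq]
        gcongr
        linarith [two_mul_le_add_sq (lagrangianAvg (signedValue f v) z)
          (lagrangianAvg (signedValue g v) z)]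

theorem energy_le (hk : 1 ≤ k) (hkn : k + 1 ≤ n) (f : OutcomeFamily n) :
    energy k f ≤ isotropicCount n k 0 + isotropicCount n k 1 *
      (∑ v, bias f v ^ 2 + 4 * 2 ^ (n + k)) := by
  have hpos : 0 < isotropicCount n k 1 := isotropicCount_pos (by omega)
  have hzero : ∑ z ∈ isotropicAbove k ⊥, lagrangianAvg (signedValue f 0) z ^ 2 ≤
      isotropicCount n k 0 := by
    rw [← card_isotropicAbove k.zero_le bot_mem_Lset, ← nsmul_one]
    exact sum_le_card_nsmul _ _ _ fun z _ ↦
      (sq_le_one_iff_abs_le_one _).2 (abs_lagrangianAvg_le_one abs_signedValue_le_one z)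
  have hne : ∀ v ≠ 0, ∑ z ∈ isotropicAbove k (F2 ∙ v), lagrangianAvg (signedValue f v) z ^ 2 ≤
      isotropicCount n k 1 * (bias f v ^ 2 + 4 * 2 ^ k / 2 ^ n) := fun v hv ↦ by
    rw [bias_of_ne_zero hv]
    refine (sum_sq_lagrangianAvg_le abs_signedValue_le_one hkn hk
      (span_singleton_mem_Lset hv)).trans ?_
    gcongr
    linarith
  simp only [energy, sum_isotropicAbove_sum_mem, bot_sup_eq]
  calc ∑ v, ∑ z ∈ isotropicAbove k (F2 ∙ v), lagrangianAvg (signedValue f v) z ^ 2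
      ≤ ∑ v, ((if v = 0 then isotropicCount n k 0 else 0) +
          isotropicCount n k 1 * (bias f v ^ 2 + 4 * 2 ^ k / 2 ^ n)) := by
        refine sum_le_sum fun v _ ↦ ?_
        split_ifs with hv
        · subst hv
          rw [Submodule.span_zero_singleton]
          exact hzero.trans (le_add_of_nonneg_right (by positivity))
        · rw [zero_add]
          exact hne v hv
    _ = _ := by
        rw [sum_add_distrib, sum_ite_eq', if_pos (mem_univ _), ← mul_sum, sum_add_distrib,
          sum_const, card_univ, card_PV, nsmul_eq_mul, Nat.cast_pow, Nat.cast_ofNat, four_pow_eq,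
          two_mul, pow_add, pow_add]
        field_simp

theorem energy_half_le (hk : 2 ≤ k) {f : OutcomeFamily (2 * k)} (hf : f.IsValid) :
    energy k f ≤ 15 * √2 ^ k * isotropicCount (2 * k) k 0 := by
  have hN₀ : 0 < isotropicCount (2 * k) k 0 := isotropicCount_pos (by omega)
  have hN₁ : 0 < isotropicCount (2 * k) k 1 := isotropicCount_pos (by omega)
  have henergy := energy_le (k := k) (n := 2 * k) (by omega) (by omega) f
  have hbias := sq_sum_sq_bias_le (by omega) hf
  have hstep := isotropicCount_step (n := 2 * k) (j := 0) (by omega : 0 < k)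
  have hs : 1 ≤ √2 ^ k := one_le_pow₀ (Real.one_le_sqrt.2 one_le_two)
  have htwo : (2 : ℝ) ^ k = (√2 ^ k) ^ 2 := (sq_sqrt_two_pow k).symm
  have htwo_le : (2 : ℝ) ≤ (√2 ^ k) ^ 2 := htwo ▸ le_self_pow₀ one_le_two (by omega)
  rw [show 7 * (2 * k) = k * 14 by ring, pow_mul] at hbias
  rw [show 2 * (2 * k) - 0 = k * 4 by omega, pow_mul, htwo, pow_zero] at hstep
  rw [show 2 * k + k = k * 3 by ring, pow_mul, htwo] at henergy
  set s := √2 ^ k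
  set E := ∑ v, bias f v ^ 2
  set N := isotropicCount (2 * k) k
  have hE : E ≤ 3 * s ^ 7 := by
    refine le_of_sq_le_sq (hbias.trans ?_) (by positivity)
    linarith [show 0 ≤ s ^ 14 by positivity]
  have hN : N 1 * s ^ 6 ≤ 2 * N 0 := by
    have hs₈ : 2 ≤ (s ^ 2) ^ 4 := htwo_le.trans (le_self_pow₀ (one_le_pow₀ hs) (by norm_num))
    refine le_of_mul_le_mul_left (a := s ^ 2) ?_ (by positivity)
    linarith [mul_le_mul_of_nonneg_right hs₈ hN₁.le]
  calc energy k f ≤ N 0 + N 1 * (E + 4 * (s ^ 2) ^ 3) := henergy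
    _ = N 0 + N 1 * (E + 4 * s ^ 6) := by rw [← pow_mul]
    _ ≤ N 0 + N 1 * (3 * s ^ 7 + 4 * s ^ 7) := by
        gcongr
        norm_num
    _ = N 0 + N 1 * s ^ 6 * (7 * s) := by ring
    _ ≤ s * N 0 + 2 * N 0 * (7 * s) := by
        gcongr
        exact le_mul_of_one_le_left hN₀.le hs
    _ = 15 * s * N 0 := by ring

theorem sqrt_two_pow_mul_card_consistentPairs_le (hk : 2 ≤ k) {f g : OutcomeFamily (2 * k)}
    (hf : f.IsValid) (hg : g.IsValid) :
    √2 ^ k * #(consistentPairs k f g) ≤ 45 * #(pairsMeetingIn (2 * k) k) := by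
  set N := isotropicCount (2 * k) (2 * k) k
  refine le_of_mul_le_mul_left (a := √2 ^ k) ?_ (by positivity)
  calc √2 ^ k * (√2 ^ k * #(consistentPairs k f g))
      = 2 ^ k * #(consistentPairs k f g) := by rw [← sq_sqrt_two_pow k]; ring
    _ ≤ N ^ 2 * ((energy k f + energy k g) / 2) := two_pow_mul_card_consistentPairs_le hf hg
    _ ≤ N ^ 2 * (15 * √2 ^ k * isotropicCount (2 * k) k 0) := by
        gcongr
        linarith [energy_half_le hk hf, energy_half_le hk hg]
    _ = √2 ^ k * (15 * (isotropicCount (2 * k) k 0 * N ^ 2)) := by ring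
    _ ≤ √2 ^ k * (15 * (3 * #(pairsMeetingIn (2 * k) k))) := by
        refine mul_le_mul_of_nonneg_left (mul_le_mul_of_nonneg_left ?_ (by norm_num))
          (by positivity)
        exact isotropicCount_mul_sq_le_card_pairsMeetingIn (by omega)
    _ = √2 ^ k * (45 * #(pairsMeetingIn (2 * k) k)) := by ring

end Pairs

section Rigidity

variable {n k : ℕ} {x x' u : Submodule F2 (PV n)} {f g : OutcomeFamily n}

theorem not_perp_le_sup {j : ℕ} (hx : x ∈ Lset n n) (hu : u ∈ Lset n j) (hj : j < n) :
    ¬ perp u ≤ u ⊔ x := fun h ↦ by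
  have hfin := (sup_inf_perp_mem_Lset hx hu.1).2
  rw [← sup_inf_assoc_of_le x hu.1.le_perp, inf_eq_right.2 h, finrank_perp, hu.2] at hfin
  omega

theorem exists_common_transversal {j : ℕ} (hx : x ∈ Lset n n) (hx' : x' ∈ Lset n n) (hj : j ≤ n)
    (hu : u ∈ Lset n j) : ∃ y, y ∈ transversals x u ∧ y ∈ transversals x' u := by
  induction hj using Nat.decreasingInduction generalizing u with
  | self =>
    have huu : u ∈ Lset n n ∧ u ≤ u := ⟨hu, le_rfl⟩
    exact ⟨u, mem_transversals.2 ⟨huu, rfl⟩, mem_transversals.2 ⟨huu, rfl⟩⟩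
  | of_succ j hj ih =>
    have hcover : ¬ (perp u : Set (PV n)) ⊆ (u ⊔ x : Submodule F2 (PV n)) ∪
        (u ⊔ x' : Submodule F2 (PV n)) := by
      rw [AddSubgroupClass.subset_union, not_or]
      exact ⟨not_perp_le_sup hx hu hj, not_perp_le_sup hx' hu hj⟩
    obtain ⟨w, hw, hwx⟩ := Set.not_subset.1 hcover
    obtain ⟨hwx, hwx'⟩ := not_or.1 hwx
    have hext : w ∈ extensionVectors u :=
      mem_extensionVectors.2 ⟨hw, fun h ↦ hwx (Submodule.mem_sup_left h)⟩
    obtain ⟨y, hy, hy'⟩ := ih (sup_span_singleton_mem_Lset hu hext)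
    simp only [mem_transversals, inf_sup_span_singleton hwx, inf_sup_span_singleton hwx']
      at hy hy' ⊢
    have huy : u ≤ y := le_sup_left.trans hy.1.2
    exact ⟨y, ⟨⟨hy.1.1, huy⟩, hy.2⟩, ⟨⟨hy.1.1, huy⟩, hy'.2⟩⟩

-- The answer at `v` of a third Lagrangian meeting both `x` and `x'` in the same `k`-dimensional
-- subspace containing `v` agrees with both.
theorem signedValue_eq_of_le_finrank_inf (hk : 1 ≤ k)
    (hwin : ∀ p ∈ pairsMeetingIn n k, ConsistentOn (f p.1) (g p.2)) (hx : x ∈ Lset n n)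
    (hx' : x' ∈ Lset n n) {v : PV n} (hv : v ∈ x) (hv' : v ∈ x')
    (h : k ≤ Module.finrank F2 ↥(x ⊓ x')) : signedValue f v x = signedValue f v x' := by
  obtain ⟨z, hvz, hz, hzk⟩ := exists_le_le_finrank_eq
    ((Submodule.span_singleton_le_iff_mem v (x ⊓ x')).2 ⟨hv, hv'⟩)
    ((finrank_span_singleton_F2_le_one v).trans hk) h
  obtain ⟨hzx, hzx'⟩ := le_inf_iff.1 hz
  have hzL : z ∈ Lset n k := ⟨hx.1.mono hzx, hzk⟩
  obtain ⟨y, hy, hy'⟩ := exists_common_transversal hx hx' (hzk ▸ hzL.1.finrank_le) hzL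
  obtain ⟨⟨hyL, hzy⟩, hxy⟩ := mem_transversals.1 hy
  obtain ⟨-, hxy'⟩ := mem_transversals.1 hy'
  rw [inf_eq_right.2 hzx] at hxy
  rw [inf_eq_right.2 hzx'] at hxy'
  have hvy : v ∈ y := hzy ((Submodule.span_singleton_le_iff_mem v z).1 hvz)
  rw [signedValue_of_mem hv, signedValue_of_mem hv',
    hwin (x, y) (mem_pairsMeetingIn.2 ⟨hx, hyL, hxy ▸ hzk⟩) v hv hvy,
    hwin (x', y) (mem_pairsMeetingIn.2 ⟨hx', hyL, hxy' ▸ hzk⟩) v hv' hvy]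

-- Replacing `x` by `⟨w⟩ + (x ∩ ⟨w⟩^⊥)` for some `w ∈ x' \ x` moves `x` to an adjacent Lagrangian
-- that meets `x'` in a larger subspace.
theorem signedValue_eq_of_forall_consistentOn (hk : 1 ≤ k) (hkn : k + 1 ≤ n)
    (hwin : ∀ p ∈ pairsMeetingIn n k, ConsistentOn (f p.1) (g p.2)) (hx : x ∈ Lset n n)
    (hx' : x' ∈ Lset n n) {v : PV n} (hv : v ∈ x) (hv' : v ∈ x') :
    signedValue f v x = signedValue f v x' := by
  induction hd : n - Module.finrank F2 ↥(x ⊓ x') using Nat.strong_induction_on generalizing x with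
  | _ d ih =>
  by_cases hle : x' ≤ x
  · rw [Submodule.eq_of_le_of_finrank_eq hle (hx'.2.trans hx.2.symm)]
  obtain ⟨w, hw', hw⟩ := SetLike.not_le_iff_exists.1 hle
  set y := F2 ∙ w ⊔ x ⊓ perp (F2 ∙ w) with hy
  have hyL : y ∈ Lset n n := sup_inf_perp_mem_Lset hx (.span_singleton w)
  have hperp : x' ≤ perp (F2 ∙ w) := by
    rw [← perp_eq_self hx']
    exact perp_antitone ((Submodule.span_singleton_le_iff_mem w x').2 hw')
  have hinf : x ⊓ x' ≤ y := (inf_le_inf_left x hperp).trans le_sup_right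
  have hadj : n ≤ Module.finrank F2 ↥(x ⊓ y) + 1 := by
    have hsup := Submodule.finrank_add_le_finrank_add_finrank (F2 ∙ w) (x ⊓ perp (F2 ∙ w))
    have hle : x ⊓ perp (F2 ∙ w) ≤ x ⊓ y := le_inf inf_le_left le_sup_right
    have hmono := Submodule.finrank_mono hle
    have hspan := finrank_span_singleton_F2_le_one w
    rw [← hy, hyL.2] at hsup
    omega
  have hwy : w ∈ y := Submodule.mem_sup_left (Submodule.mem_span_singleton_self w)
  have hcloser : x ⊓ x' < y ⊓ x' :=
    lt_of_le_not_ge (le_inf hinf inf_le_right) fun h ↦ hw (h ⟨hwy, hw'⟩).1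
  have hlt := Submodule.finrank_lt_finrank_of_lt hcloser
  have hbound := Submodule.finrank_mono (inf_le_left : y ⊓ x' ≤ y)
  rw [hyL.2] at hbound
  have hvy : v ∈ y := hinf ⟨hv, hv'⟩
  rw [signedValue_eq_of_le_finrank_inf hk hwin hx hyL hv hvy (by omega)]
  exact ih _ (by omega) hyL hvy rfl

theorem IsIsotropic.exists_mem_Lset_ge (hu : IsIsotropic u) : ∃ x ∈ Lset n n, u ≤ x := by
  obtain ⟨x, hx⟩ := isotropicAbove_nonempty hu.finrank_le le_rfl ⟨hu, rfl⟩
  exact ⟨x, mem_isotropicAbove.1 hx⟩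

theorem phaseForm_eq_of_signedValue_eq (hf : f.IsValid) {s : PV n → ℝ}
    (hs : ∀ v, ∀ x ∈ Lset n n, v ∈ x → signedValue f v x = s v) :
    phaseForm s = (4 ^ n * 4 ^ n + 4 ^ n) / 2 := by
  have hterm : ∀ a b, s a * s b * s (a + b) * (phase a b).re = (1 + signChar (symp a b)) / 2 := by
    intro a b
    by_cases h : symp a b = 0
    · have hb : b ∈ perp (F2 ∙ a) := mem_perp.2 fun c hc ↦ by
        obtain rfl | rfl := mem_span_singleton_F2.1 hc
        exacts [symp_zero_left b, h]
      obtain ⟨x, hx, hle⟩ :=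
        ((IsIsotropic.span_singleton a).sup_span_singleton hb).exists_mem_Lset_ge
      obtain ⟨ha, hb⟩ := sup_le_iff.1 hle
      rw [Submodule.span_singleton_le_iff_mem] at ha hb
      have hab := x.add_mem ha hb
      have hsq := signedValue_mul_self (f := f) hab
      have hphase := signChar_mul_self (wght a b)
      rw [← re_phase_of_symp_eq_zero h] at hphase
      rw [← hs a x hx ha, ← hs b x hx hb, ← hs _ x hx hab, signedValue_mul hf hx ha hb, h,
        AddChar.map_zero_eq_one]
      linear_combination ((phase a b).re * (phase a b).re) * hsq + hphase
    · rw [re_phase_of_symp_ne_zero h, signChar_eq_ite, if_neg h]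
      ring
  simp only [phaseForm, hterm, ← sum_div, sum_add_distrib, sum_signChar_symp, sum_ite_eq',
    mem_univ, if_true, sum_const, card_univ, card_PV, nsmul_eq_mul]
  norm_num

-- The Mermin-Peres obstruction: a noncontextual family of outcomes would make `phaseForm` exceed
-- its operator norm bound.
theorem exists_signedValue_ne (hn : 2 ≤ n) (hf : f.IsValid) : ∃ v, ∃ x ∈ Lset n n,
    ∃ x' ∈ Lset n n, v ∈ x ∧ v ∈ x' ∧ signedValue f v x ≠ signedValue f v x' := by
  by_contra! hcontra
  choose X hXL hX using fun v : PV n ↦ (IsIsotropic.span_singleton v).exists_mem_Lset_ge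
  have hform := phaseForm_eq_of_signedValue_eq hf fun v x hx hv ↦
    hcontra v x hx _ (hXL v) hv ((Submodule.span_singleton_le_iff_mem v (X v)).1 (hX v))
  have hle := phaseForm_le fun v ↦ abs_signedValue_le_one (f := f) (v := v) (X v)
  have htwo : 2 ≤ √2 ^ n := by
    calc 2 = √2 ^ 2 := (Real.sq_sqrt two_pos.le).symm
      _ ≤ √2 ^ n := pow_le_pow_right₀ (Real.one_le_sqrt.2 one_le_two) hn
  rw [hform, four_pow_eq, ← sq_sqrt_two_pow, mul_comm 2 n, mul_comm 7 n, pow_mul, pow_mul] at hle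
  set t := √2 ^ n
  have hlow : 2 * t ^ 7 ≤ t * t ^ 7 := mul_le_mul_of_nonneg_right htwo (by positivity)
  linarith [show 0 < t ^ 4 by positivity]

theorem card_consistentPairs_lt (hk : 1 ≤ k) (hkn : k + 1 ≤ n) (hf : f.IsValid)
    (g : OutcomeFamily n) : #(consistentPairs k f g) < #(pairsMeetingIn n k) := by
  classical
  refine card_lt_card (filter_ssubset.2 ?_)
  by_contra! hwin
  obtain ⟨v, x, hx, x', hx', hv, hv', hne⟩ := exists_signedValue_ne (by omega) hf
  exact hne (signedValue_eq_of_forall_consistentOn hk hkn hwin hx hx' hv hv')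

end Rigidity

section LocalValue

open Filter Topology

variable {k : ℕ}

/-- `ε ^ n` bounds the local value of the game `Z_{n/2}` at `n = 2 * k`. -/
def BoundsLocalValue (ε : ℝ) (k : ℕ) : Prop :=
  ∀ f g : OutcomeFamily (2 * k), f.IsValid → g.IsValid →
    (#(consistentPairs k f g) : ℝ) ≤ ε ^ (2 * k) * #(pairsMeetingIn (2 * k) k)

theorem eventually_boundsLocalValue (hk : 1 ≤ k) : ∀ᶠ ε in 𝓝[<] 1, BoundsLocalValue ε k := by
  have hlim : Tendsto (fun ε : ℝ ↦ ε ^ (2 * k) * #(pairsMeetingIn (2 * k) k)) (𝓝[<] 1)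
      (𝓝 #(pairsMeetingIn (2 * k) k)) := by
    have hcont : Continuous fun ε : ℝ ↦ ε ^ (2 * k) * #(pairsMeetingIn (2 * k) k) := by fun_prop
    simpa only [one_pow, one_mul] using (hcont.tendsto 1).mono_left nhdsWithin_le_nhds
  filter_upwards [hlim.eventually_const_le (sub_one_lt _)] with ε hε f g hf _
  have hlt : (#(consistentPairs k f g) : ℝ) + 1 ≤ #(pairsMeetingIn (2 * k) k) := by
    exact_mod_cast card_consistentPairs_lt hk (by omega) hf g
  linarith

theorem eventually_forall_boundsLocalValue :
    ∀ᶠ k in atTop, ∀ ε : ℝ, 95 / 100 ≤ ε → BoundsLocalValue ε k := by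
  have hbase : 1 < (95 / 100) ^ 2 * √2 := by
    linarith [Real.le_sqrt_of_sq_le (by norm_num : (1.4 : ℝ) ^ 2 ≤ 2)]
  filter_upwards [(tendsto_pow_atTop_atTop_of_one_lt hbase).eventually_ge_atTop 45,
    eventually_ge_atTop 2] with k hpow hk ε hε f g hf hg
  refine le_of_mul_le_mul_left (a := √2 ^ k) ?_ (by positivity)
  calc √2 ^ k * #(consistentPairs k f g)
      ≤ 45 * #(pairsMeetingIn (2 * k) k) := sqrt_two_pow_mul_card_consistentPairs_le hk hf hg
    _ ≤ ((95 / 100) ^ 2 * √2) ^ k * #(pairsMeetingIn (2 * k) k) := by gcongr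
    _ ≤ (ε ^ 2 * √2) ^ k * #(pairsMeetingIn (2 * k) k) := by gcongr
    _ = √2 ^ k * (ε ^ (2 * k) * #(pairsMeetingIn (2 * k) k)) := by
      rw [mul_pow, pow_mul]
      ring

theorem exists_forall_boundsLocalValue :
    ∃ ε : ℝ, ε ∈ Set.Ioo (0 : ℝ) 1 ∧ ∀ k, 1 ≤ k → BoundsLocalValue ε k := by
  obtain ⟨K, hK⟩ := eventually_atTop.1 eventually_forall_boundsLocalValue
  have hsmall : ∀ᶠ ε in 𝓝[<] (1 : ℝ), ∀ k ∈ Ico 1 K, BoundsLocalValue ε k :=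
    (eventually_all_finset _).2 fun k hk ↦ eventually_boundsLocalValue (mem_Ico.1 hk).1
  have hIoo : Set.Ioo (95 / 100 : ℝ) 1 ∈ 𝓝[<] 1 := Ioo_mem_nhdsLT (by norm_num)
  obtain ⟨ε, hε, hεIoo⟩ := (hsmall.and hIoo).exists
  refine ⟨ε, ⟨by linarith [hεIoo.1], hεIoo.2⟩, fun k hk ↦ ?_⟩
  obtain hkK | hKk := lt_or_ge k K
  · exact hε k (mem_Ico.2 ⟨hk, hkK⟩)
  · exact hK k hKk ε hεIoo.1.le

end LocalValue

/-- There is `ε ∈ (0,1)` such that for every even `n ≥ 2` and every pair of outcome families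
`f, g` on the maximal isotropic subspaces of `F2^{2n}`, the fraction of ordered pairs `(x,y)`
with `dim(x ∩ y) = n/2` for which `f_x` and `g_y` are consistent is at most `ε^n`
(i.e. `Val_loc(Z_{n/2}) < ε^n`). -/
theorem local_value_half_game :
    ∃ ε : ℝ, ε ∈ Set.Ioo (0 : ℝ) 1 ∧ ∀ n : ℕ, Even n → 2 ≤ n →
      ∀ f g : (S : Submodule F2 (PV n)) → (S → F2),
        (∀ S ∈ Lset n n, IsOutcome S (f S)) →
        (∀ S ∈ Lset n n, IsOutcome S (g S)) →
        (Nat.card {p : Submodule F2 (PV n) × Submodule F2 (PV n) |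
            p.1 ∈ Lset n n ∧ p.2 ∈ Lset n n ∧
            Module.finrank F2 ↥(p.1 ⊓ p.2) = n / 2 ∧
            ConsistentOn (f p.1) (g p.2)} : ℝ) ≤
          ε ^ n *
            (Nat.card {p : Submodule F2 (PV n) × Submodule F2 (PV n) |
              p.1 ∈ Lset n n ∧ p.2 ∈ Lset n n ∧
              Module.finrank F2 ↥(p.1 ⊓ p.2) = n / 2} : ℝ) := by
  obtain ⟨ε, hε, hbound⟩ := exists_forall_boundsLocalValue
  refine ⟨ε, hε, fun n hn hn2 f g hf hg ↦ ?_⟩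
  obtain ⟨k, rfl⟩ := hn.two_dvd
  rw [Nat.mul_div_cancel_left k two_pos]
  have hconsistent := Nat.subtype_card (consistentPairs k f g) fun p ↦ mem_consistentPairs
  have hpairs := Nat.subtype_card (pairsMeetingIn (2 * k) k) fun p ↦ mem_pairsMeetingIn
  have hle := hbound k (by omega) f g hf hg
  rw [← hconsistent, ← hpairs] at hle
  exact hle
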